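/- arXiv:2105.07247 — 5 statements merged into one kernel-verified Lean document; each statement's English description precedes it below -/
import Mathlib

section
/- Let G be a finite group and N a normal subgroup such that G/N is cyclic, generated by the coset of q ∈ G. Then for an irreducible complex character ρ of G the following are equivalent: (a) ρ is not identically zero on qN; (b) the stabilizer of ρ in Q̂ under the tensoring action is trivial; (c) the restriction of ρ to N is an irreducible character of N. -/
open scoped BigOperators

/-- `ρ : G → ℂ` is the character of an irreducible (simple) finite-dimensional
complex representation of `G`. -/
def IsIrrChar (G : Type) [Group G] (ρ : G → ℂ) : Prop :=
  ∃ V : FDRep ℂ G, CategoryTheory.Simple V ∧ ρ = V.character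

/-- `Θ : G → ℂ` is the character of some finite-dimensional complex representation of `G`. -/
def IsChar (G : Type) [Group G] (Θ : G → ℂ) : Prop :=
  ∃ V : FDRep ℂ G, Θ = V.character

variable {G : Type} [Group G]

/-- The action of a character `χ ∈ Q̂` (where `Q = G ⧸ N`) on a function `ρ : G → ℂ`:
`(χ · ρ)(g) = χ(gN) · ρ(g)`. -/
def charMul (N : Subgroup G) [N.Normal] (χ : (G ⧸ N) →* ℂˣ) (ρ : G → ℂ) : G → ℂ :=
  fun g => (χ (g : G ⧸ N) : ℂ) * ρ g

/-- The orbit of `ρ` under the tensoring action of `Q̂ = Hom(G ⧸ N, ℂˣ)`. -/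
def qhatOrbit (N : Subgroup G) [N.Normal] (ρ : G → ℂ) : Set (G → ℂ) :=
  {ρ' | ∃ χ : (G ⧸ N) →* ℂˣ, ρ' = charMul N χ ρ}

/-- The coset `qN`, as a subset of `G`. -/
def coset (N : Subgroup G) [N.Normal] (q : G) : Set G :=
  {g | (g : G ⧸ N) = (q : G ⧸ N)}

/-- `C_q`: the set of conjugacy classes of `G` contained in the coset `qN`. -/
def Cset (N : Subgroup G) [N.Normal] (q : G) : Set (ConjClasses G) :=
  {c | c.carrier ⊆ coset N q}

/-- `R_q`: the set of `Q̂`-orbits on the irreducible characters of `G`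
containing a character not identically zero on `qN`. -/
def Rset (N : Subgroup G) [N.Normal] (q : G) : Set (Set (G → ℂ)) :=
  {S | (∃ ρ, IsIrrChar G ρ ∧ S = qhatOrbit N ρ) ∧ ∃ ρ' ∈ S, ∃ g ∈ coset N q, ρ' g ≠ 0}

/-- The class function `π_x` for `x ∈ Q = G ⧸ N`:
`π_x(g) = (1/#Q̂) ∑_{χ ∈ Q̂} conj(χ(x)) χ(gN)`. -/
noncomputable def piQ (N : Subgroup G) [N.Normal] (x : G ⧸ N) : G → ℂ :=
  fun g => (Nat.card ((G ⧸ N) →* ℂˣ) : ℂ)⁻¹ *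
    ∑ᶠ χ : (G ⧸ N) →* ℂˣ, (starRingEnd ℂ) (χ x : ℂ) * (χ (g : G ⧸ N) : ℂ)

/-- The space of class functions on `G`, as a submodule of `G → ℂ`. -/
noncomputable def classFunSubmodule (G : Type) [Group G] : Submodule ℂ (G → ℂ) where
  carrier := {f | ∀ g h : G, f (h * g * h⁻¹) = f g}
  add_mem' := by intro a b ha hb g h; simp only [Pi.add_apply, ha g h, hb g h]
  zero_mem' := by intro g h; rfl
  smul_mem' := by intro c f hf g h; simp only [Pi.smul_apply, hf g h]

/-- The space of class functions on `G` vanishing outside the coset `qN`. -/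
noncomputable def cosetClassFun (N : Subgroup G) [N.Normal] (q : G) : Submodule ℂ (G → ℂ) where
  carrier := {f | (∀ g h : G, f (h * g * h⁻¹) = f g) ∧ ∀ g, g ∉ coset N q → f g = 0}
  add_mem' := by
    intro a b ha hb
    exact ⟨fun g h => by simp only [Pi.add_apply, ha.1 g h, hb.1 g h],
      fun g hg => by simp only [Pi.add_apply, ha.2 g hg, hb.2 g hg, add_zero]⟩
  zero_mem' := ⟨fun g h => rfl, fun g hg => rfl⟩
  smul_mem' := by
    intro c f hf
    exact ⟨fun g h => by simp only [Pi.smul_apply, hf.1 g h],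
      fun g hg => by simp only [Pi.smul_apply, hf.2 g hg, smul_zero]⟩

theorem aux_dual_sum (Q : Type) [CommGroup Q] [Finite Q] [Fintype (Q →* ℂˣ)] [DecidableEq Q]
    (y : Q) : ∑ χ : Q →* ℂˣ, ((χ y : ℂˣ) : ℂ) = if y = 1 then (Nat.card Q : ℂ) else 0 := by
  have : NeZero (Monoid.exponent Q) := ⟨Monoid.exponent_ne_zero_of_finite⟩
  split_ifs with h
  · subst h
    simp [← CommGroup.card_monoidHom_of_hasEnoughRootsOfUnity Q ℂ, Nat.card_eq_fintype_card]
  · obtain ⟨φ, hφ⟩ := CommGroup.exists_apply_ne_one_of_hasEnoughRootsOfUnity Q ℂ h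
    let f : (Q →* ℂˣ) →* ℂ := (Units.coeHom ℂ).comp (MonoidHom.eval y)
    have hf : f ≠ 1 := by
      intro hh
      apply hφ
      have := DFunLike.congr_fun hh φ
      exact Units.ext this
    exact sum_hom_units_eq_zero f hf

theorem aux_irr_iff (H : Type) [Group H] [Fintype H] (V : FDRep ℂ H) :
    IsIrrChar H V.character ↔ ∑ g : H, V.character g * V.character g⁻¹ = Nat.card H := by
  constructor
  · rintro ⟨W, hW, h⟩
    rw [h]
    exact (FDRep.simple_iff_char_is_norm_one W).1 hW
  · intro h
    exact ⟨V, (FDRep.simple_iff_char_is_norm_one V).2 h, rfl⟩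

/-- Twist of a representation by a linear character. -/
noncomputable def auxTwist (H : Type) [Group H] (χ : H →* ℂˣ) (V : FDRep ℂ H) : FDRep ℂ H :=
  FDRep.of (V := V)
    ({ toFun := fun g => ((χ g : ℂˣ) : ℂ) • V.ρ g
       map_one' := by simp
       map_mul' := fun a b => by
        simp [smul_smul, mul_comm] } : H →* (V →ₗ[ℂ] V))

theorem auxTwist_char (H : Type) [Group H] (χ : H →* ℂˣ) (V : FDRep ℂ H) (g : H) :
    (auxTwist H χ V).character g = ((χ g : ℂˣ) : ℂ) * V.character g := by
  have : (auxTwist H χ V).character g = LinearMap.trace ℂ V (((χ g : ℂˣ) : ℂ) • V.ρ g) := rfl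
  rw [this, map_smul]; rfl

theorem aux_inner (H : Type) [Group H] [Fintype H] (χ : H →* ℂˣ) (V : FDRep ℂ H)
    [CategoryTheory.Simple V] [Decidable (∀ g, ((χ g : ℂˣ) : ℂ) * V.character g = V.character g)] :
    ∑ g : H, ((χ g : ℂˣ) : ℂ) * (V.character g * V.character g⁻¹) =
      if (∀ g, ((χ g : ℂˣ) : ℂ) * V.character g = V.character g) then (Nat.card H : ℂ) else 0 := by
  classical
  have h0 : (Nat.card H : ℂ) ≠ 0 := by simp
  have hV := (FDRep.simple_iff_char_is_norm_one V).1 inferInstance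
  split_ifs with h
  · rw [← hV]
    exact Finset.sum_congr rfl fun g _ => by rw [← mul_assoc, h]
  · have : CategoryTheory.Simple (auxTwist H χ V) := by
      rw [FDRep.simple_iff_char_is_norm_one, ← hV]
      refine Finset.sum_congr rfl fun g _ => ?_
      rw [auxTwist_char, auxTwist_char, map_inv, mul_mul_mul_comm]
      simp
    have hinv := invertibleOfNonzero h0
    have ho := FDRep.char_orthonormal (auxTwist H χ V) V
    rw [if_neg] at ho
    · simp only [auxTwist_char] at ho
      rcases mul_eq_zero.1 ho with ho | ho
      · exact absurd ho (inv_ne_zero h0)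
      · simpa [mul_assoc] using ho
    · rintro ⟨i⟩
      apply h
      intro g
      rw [← auxTwist_char, FDRep.char_iso i]

/-- If `G ⧸ N` is cyclic generated by `qN`, then for irreducible `ρ`:
`ρ` not identically zero on `qN` ⟺ `Stab_{Q̂}(ρ)` is trivial ⟺ `Res_N ρ` is irreducible. -/
theorem nonzero_on_coset_iff_stab_trivial_iff_res_irreducible
    (G : Type) [Group G] [Fintype G] (N : Subgroup G) [N.Normal] (q : G)
    (hgen : ∀ x : G ⧸ N, x ∈ Subgroup.zpowers ((q : G ⧸ N)))
    (ρ : G → ℂ) (hρ : IsIrrChar G ρ) :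
    ((∃ g ∈ coset N q, ρ g ≠ 0) ↔
        (∀ χ : (G ⧸ N) →* ℂˣ, charMul N χ ρ = ρ → χ = 1)) ∧
    ((∃ g ∈ coset N q, ρ g ≠ 0) ↔ IsIrrChar ↥N (fun n : ↥N => ρ ↑n)) := by
  classical
  obtain ⟨V, hV, rfl⟩ := hρ
  let _ : CommGroup (G ⧸ N) :=
    { (inferInstance : Group (G ⧸ N)) with
      mul_comm := fun a b => by
        obtain ⟨m, rfl⟩ := hgen a
        obtain ⟨n, rfl⟩ := hgen b
        exact zpow_mul_comm _ m n }
  have : NeZero (Monoid.exponent (G ⧸ N)) := ⟨Monoid.exponent_ne_zero_of_finite⟩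
  have : Finite ((G ⧸ N) →* ℂˣ) :=
    (CommGroup.monoidHom_mulEquiv_of_hasEnoughRootsOfUnity (G ⧸ N) ℂ).some.toEquiv.finite_iff.2
      inferInstance
  let _ : Fintype ((G ⧸ N) →* ℂˣ) := Fintype.ofFinite _
  have hG0 : (Nat.card G : ℂ) ≠ 0 := by simp
  have hQ0 : (Nat.card (G ⧸ N) : ℂ) ≠ 0 := by simp
  have hcard : (Nat.card G : ℂ) = Nat.card (G ⧸ N) * Nat.card N := by
    exact_mod_cast N.card_eq_card_quotient_mul_card_subgroup
  -- Fourier inversion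
  have key : ∀ x : G ⧸ N,
      ∑ χ : (G ⧸ N) →* ℂˣ, (if charMul N χ V.character = V.character then
        ((χ x⁻¹ : ℂˣ) : ℂ) * Nat.card G else 0) =
      Nat.card (G ⧸ N) * ∑ g : G, if (g : G ⧸ N) = x then
        V.character g * V.character g⁻¹ else 0 := by
    intro x
    have h1 : ∀ χ : (G ⧸ N) →* ℂˣ, (if charMul N χ V.character = V.character then
        ((χ x⁻¹ : ℂˣ) : ℂ) * Nat.card G else 0) =
        ∑ g : G, ((χ ((g : G ⧸ N) * x⁻¹) : ℂˣ) : ℂ) * (V.character g * V.character g⁻¹) := by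
      intro χ
      have h2 := aux_inner G (χ.comp (QuotientGroup.mk' N)) V
      have h3 : (∀ g, ((χ.comp (QuotientGroup.mk' N) g : ℂˣ) : ℂ) * V.character g
          = V.character g) ↔ charMul N χ V.character = V.character := by
        rw [funext_iff]; rfl
      simp only [h3] at h2
      have h4 : ∑ g : G, ((χ ((g : G ⧸ N) * x⁻¹) : ℂˣ) : ℂ) * (V.character g * V.character g⁻¹) =
          ((χ x⁻¹ : ℂˣ) : ℂ) * ∑ g : G, ((χ.comp (QuotientGroup.mk' N) g : ℂˣ) : ℂ) *
            (V.character g * V.character g⁻¹) := by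
        rw [Finset.mul_sum]
        refine Finset.sum_congr rfl fun g _ => ?_
        rw [map_mul, Units.val_mul]
        simp only [MonoidHom.comp_apply, QuotientGroup.mk'_apply]
        ring
      rw [h4, h2]
      split_ifs <;> simp
    rw [Finset.sum_congr rfl fun χ _ => h1 χ, Finset.sum_comm, Finset.mul_sum]
    refine Finset.sum_congr rfl fun g _ => ?_
    rw [← Finset.sum_mul, aux_dual_sum (G ⧸ N)]
    simp only [mul_inv_eq_one]
    split_ifs <;> simp
  have hsub : (∑ g : G, if (g : G ⧸ N) = 1 then V.character g * V.character g⁻¹ else 0) =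
      ∑ n : N, V.character (n : G) * V.character (n : G)⁻¹ := by
    rw [← Finset.sum_filter]
    symm
    refine Finset.sum_bij (fun n _ => (n : G)) ?_ ?_ ?_ ?_
    · intro n _; simp
    · intro a _ b _ h; exact Subtype.ext h
    · intro g hg
      exact ⟨⟨g, by simpa using hg⟩, Finset.mem_univ _, rfl⟩
    · intro n _; rfl
  have hirr : IsIrrChar N (fun n : N => V.character (n : G)) ↔
      ∑ n : N, V.character (n : G) * V.character (n : G)⁻¹ = Nat.card N :=
    aux_irr_iff N (FDRep.of (V := V) (V.ρ.comp N.subtype))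
  have hone : charMul N 1 V.character = V.character := by
    funext g; simp [charMul]
  have ab : (∃ g ∈ coset N q, V.character g ≠ 0) →
      (∀ χ : (G ⧸ N) →* ℂˣ, charMul N χ V.character = V.character → χ = 1) := by
    rintro ⟨g, hg, hne⟩ χ hχ
    have h1 := congrFun hχ g
    have hg' : (g : G ⧸ N) = q := hg
    have h2 : χ (q : G ⧸ N) = 1 := by
      rw [← hg']
      exact Units.ext (mul_right_cancel₀ hne (by simpa [charMul] using h1))
    refine DFunLike.ext _ _ fun x => ?_
    obtain ⟨m, rfl⟩ := hgen x
    simp [h2]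
  have bS : (∀ χ : (G ⧸ N) →* ℂˣ, charMul N χ V.character = V.character → χ = 1) →
      ∀ x : G ⧸ N, (Nat.card G : ℂ) = Nat.card (G ⧸ N) * ∑ g : G, if (g : G ⧸ N) = x then
        V.character g * V.character g⁻¹ else 0 := by
    intro hb x
    rw [← key x, Finset.sum_eq_single 1]
    · simp [hone]
    · intro χ _ hχ
      rw [if_neg fun h => hχ (hb χ h)]
    · simp
  have ba : (∀ χ : (G ⧸ N) →* ℂˣ, charMul N χ V.character = V.character → χ = 1) →
      (∃ g ∈ coset N q, V.character g ≠ 0) := by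
    intro hb
    by_contra! hz
    apply hG0
    rw [bS hb q, Finset.sum_eq_zero, mul_zero]
    intro g _
    split_ifs with h
    · rw [hz g h, zero_mul]
    · rfl
  have bc : (∀ χ : (G ⧸ N) →* ℂˣ, charMul N χ V.character = V.character → χ = 1) →
      IsIrrChar N (fun n : N => V.character (n : G)) := by
    intro hb
    have h := bS hb 1
    rw [hsub, hcard] at h
    exact hirr.2 (mul_left_cancel₀ hQ0 h).symm
  have cb : IsIrrChar N (fun n : N => V.character (n : G)) →
      (∀ χ : (G ⧸ N) →* ℂˣ, charMul N χ V.character = V.character → χ = 1) := by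
    intro hc χ hχ
    have h := key 1
    rw [hsub, hirr.1 hc, ← hcard, ← Finset.sum_filter] at h
    simp only [inv_one, map_one, Units.val_one, one_mul, Finset.sum_const, nsmul_eq_mul] at h
    have h5 : (Finset.univ.filter
        fun χ : (G ⧸ N) →* ℂˣ => charMul N χ V.character = V.character).card = 1 := by
      have := mul_right_cancel₀ hG0 (h.trans (one_mul _).symm)
      exact_mod_cast this
    exact Finset.card_le_one.1 h5.le χ (by simpa using hχ) 1 (by simpa using hone)
  exact ⟨⟨ab, ba⟩, ⟨fun h => bc (ab h), fun h => ba (cb h)⟩⟩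
end

section
/- Let G be a finite group and N a normal subgroup such that G/N is cyclic, generated by the coset of q ∈ G. Then the number of conjugacy classes of G contained in qN equals the number of Q̂-orbits on Irr G of length equal to the index (G:N). -/
open scoped BigOperators

variable {G : Type} [Group G]

section helpers

theorem ip_irr [Fintype G] {ρ σ : G → ℂ} (h1 : IsIrrChar G ρ) (h2 : IsIrrChar G σ) :
    ∑ g, ρ g * σ g⁻¹ = open Classical in if ρ = σ then (Nat.card G : ℂ) else 0 := by
  classical
  obtain ⟨V, hV, rfl⟩ := h1
  obtain ⟨W, hW, rfl⟩ := h2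
  have h0 : (Nat.card G : ℂ) ≠ 0 := by exact_mod_cast Nat.card_pos.ne'
  have := invertibleOfNonzero h0
  have key := FDRep.char_orthonormal V W
  have keyV := (FDRep.simple_iff_char_is_norm_one V).1 hV
  by_cases hi : Nonempty (V ≅ W)
  · have e : V.character = W.character := FDRep.char_iso hi.some
    rw [← e, if_pos rfl, keyV]
  · rw [if_neg hi] at key
    have z : ∑ g : G, V.character g * W.character g⁻¹ = 0 := by
      rcases mul_eq_zero.1 key with h | h
      · exact absurd h (inv_ne_zero h0)
      · exact h
    rw [if_neg, z]
    intro e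
    rw [← e, keyV] at z
    exact h0 z

theorem irr_twist [Fintype G] (N : Subgroup G) [N.Normal] (χ : (G ⧸ N) →* ℂˣ) {ρ : G → ℂ}
    (h : IsIrrChar G ρ) : IsIrrChar G (charMul N χ ρ) := by
  obtain ⟨V, hV, rfl⟩ := h
  let τ : Representation ℂ G V :=
    { toFun := fun g => (χ (g : G ⧸ N) : ℂ) • V.ρ g
      map_one' := by simp
      map_mul' := fun a b => by
        simp [smul_smul, mul_comm] }
  have hc : charMul N χ V.character = (FDRep.of τ).character := by
    funext g
    change _ = LinearMap.trace ℂ V ((χ (g : G ⧸ N) : ℂ) • V.ρ g)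
    rw [map_smul]; rfl
  refine ⟨FDRep.of τ, ?_, hc⟩
  rw [FDRep.simple_iff_char_is_norm_one, ← (FDRep.simple_iff_char_is_norm_one V).1 hV, ← hc]
  refine Finset.sum_congr rfl fun g _ => ?_
  have : (χ (g : G ⧸ N) : ℂ) * (χ ((g⁻¹ : G) : G ⧸ N) : ℂ) = 1 := by
    rw [← Units.val_mul, ← map_mul]; simp
  simp only [charMul]
  linear_combination (V.character g * V.character g⁻¹) * this

theorem class_irr {ρ : G → ℂ} (h1 : IsIrrChar G ρ) : ρ ∈ classFunSubmodule G := by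
  obtain ⟨V, hV, rfl⟩ := h1
  intro g h
  exact FDRep.char_conj V g h

theorem complete_aux [Fintype G] (f : G → ℂ) (hf : f ∈ classFunSubmodule G)
    (h : ∀ ρ, IsIrrChar G ρ → ∑ g, f g * ρ g⁻¹ = 0) : f = 0 := by
  classical
  let A := MonoidAlgebra ℂ G
  have h0 : (Nat.card G : ℂ) ≠ 0 := by exact_mod_cast Nat.card_pos.ne'
  have := invertibleOfNonzero h0
  have : NeZero (Nat.card G : ℂ) := ⟨h0⟩
  let a : MonoidAlgebra ℂ G := ∑ g, MonoidAlgebra.single g⁻¹ (f g)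
  have acomm : ∀ b : MonoidAlgebra ℂ G, a * b = b * a := by
    intro b
    induction b using MonoidAlgebra.induction_on with
    | of x =>
      simp only [a, Finset.sum_mul, Finset.mul_sum, MonoidAlgebra.of_apply,
        MonoidAlgebra.single_mul_single, mul_one, one_mul]
      refine Fintype.sum_equiv (MulAut.conj x⁻¹).toEquiv _ _ fun g => ?_
      have := hf g x⁻¹
      simp only [MulEquiv.toEquiv_eq_coe, EquivLike.coe_coe, MulAut.conj_apply, this]
      congr 1
      group
    | add x y hx hy => rw [mul_add, add_mul, hx, hy]
    | smul r x hx => rw [mul_smul_comm, smul_mul_assoc, hx]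
  have ha : a = 0 := by
    have hj : a ∈ Ring.jacobson A := by
      rw [Ring.jacobson_eq_sInf_isMaximal]
      rw [Submodule.mem_sInf]
      intro m hm
      have : Ideal.IsMaximal m := hm
      let M := A ⧸ m
      have : IsSimpleModule A M := isSimpleModule_iff_isCoatom.2 (Ideal.isMaximal_def.1 hm)
      have : Module.Finite ℂ A := inferInstanceAs (Module.Finite ℂ (MonoidAlgebra ℂ G))
      have : Module.Finite ℂ M := Module.Finite.of_surjective
        ((Submodule.mkQ m).restrictScalars ℂ) (Submodule.mkQ_surjective m)
      let τ : Representation ℂ G M := Representation.ofModule' M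
      have hτ : ∀ b : A, τ.asAlgebraHom b = Algebra.lsmul ℂ ℂ M b := by
        intro b
        simp [τ, Representation.asAlgebraHom, Representation.ofModule']
      let e : τ.asModule ≃ₗ[A] M :=
        { τ.asModuleEquiv with
          map_smul' := fun b x => by
            change τ.asModuleEquiv (b • x) = _
            rw [Representation.asModuleEquiv_map_smul, hτ]; rfl }
      have : Representation.IsIrreducible τ := by
        rw [Representation.irreducible_iff_isSimpleModule_asModule]
        exact IsSimpleModule.congr e
      have hs : CategoryTheory.Simple (FDRep.of τ) := by
        rw [FDRep.simple_iff_char_is_norm_one]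
        have := Representation.card_inv_mul_sum_char_mul_char_eq_finrank τ τ
        rw [Representation.IsIrreducible.finrank_intertwiningMap_self, Nat.cast_one,
          inv_mul_eq_one₀ h0] at this
        exact this.symm
      have ht : LinearMap.trace ℂ M (Algebra.lsmul ℂ ℂ M a) = 0 := by
        rw [← h _ ⟨FDRep.of τ, hs, rfl⟩, ← hτ]
        simp only [a, map_sum, Representation.asAlgebraHom_single, map_smul, smul_eq_mul]
        rfl
      let F : Module.End A M :=
        { toFun := fun x => a • x
          map_add' := fun x y => smul_add _ _ _
          map_smul' := fun b x => by
            simp only [RingHom.id_apply, smul_smul, acomm] }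
      obtain ⟨c, hc⟩ := (IsSimpleModule.algebraMap_end_bijective_of_isAlgClosed
        (A := A) (V := M) ℂ).2 F
      have hc' : ∀ x : M, a • x = c • x := fun x => by
        have := LinearMap.congr_fun hc x
        exact this.symm
      have hl : Algebra.lsmul ℂ ℂ M a = c • LinearMap.id := by
        ext x
        exact hc' x
      rw [hl, map_smul, LinearMap.trace_id, smul_eq_mul] at ht
      have : Nontrivial M := IsSimpleModule.nontrivial A M
      have hc0 : c = 0 := by
        rcases mul_eq_zero.1 ht with h | h
        · exact h
        · exact absurd h (by exact_mod_cast (Module.finrank_pos (R := ℂ) (M := M)).ne')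
      have := hc' (Submodule.Quotient.mk 1)
      rw [hc0, zero_smul, ← Submodule.Quotient.mk_smul, Submodule.Quotient.mk_eq_zero] at this
      simpa using this
    have : IsSemisimpleRing A := inferInstanceAs (IsSemisimpleRing (MonoidAlgebra ℂ G))
    rwa [IsSemisimpleRing.jacobson_eq_bot] at hj
  funext g
  have := congrArg (fun b : MonoidAlgebra ℂ G => b.coeff g⁻¹) ha
  simpa [a, MonoidAlgebra.coeff_sum, Finsupp.finsetSum_apply, Finsupp.single_apply] using this

end helpers

section helpers2

theorem span_irr [Fintype G] :
    classFunSubmodule G ≤ Submodule.span ℂ {ρ : G → ℂ | IsIrrChar G ρ} := by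
  classical
  have h0 : (Nat.card G : ℂ) ≠ 0 := by exact_mod_cast Nat.card_pos.ne'
  have hli : LinearIndependent ℂ (fun x : {ρ : G → ℂ | IsIrrChar G ρ} => (x : G → ℂ)) := by
    rw [linearIndependent_iff']
    intro s c hc i hi
    have h1 : ∑ g, (∑ j ∈ s, c j • (j : G → ℂ)) g * (i : G → ℂ) g⁻¹ = 0 := by
      rw [hc]; simp
    simp only [Finset.sum_apply, Pi.smul_apply, smul_eq_mul, Finset.sum_mul] at h1
    rw [Finset.sum_comm] at h1
    simp only [mul_assoc, ← Finset.mul_sum] at h1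
    rw [Finset.sum_eq_single i] at h1
    · rw [ip_irr i.2 i.2, if_pos rfl] at h1
      exact (mul_eq_zero.1 h1).resolve_right h0
    · intro j _ hj
      rw [ip_irr j.2 i.2, if_neg (fun h => hj (Subtype.ext h)), mul_zero]
    · intro h; exact absurd hi h
  have hfin := hli.setFinite
  intro f hf
  let p : G → ℂ := ∑ ρ ∈ hfin.toFinset, ((Nat.card G : ℂ)⁻¹ * ∑ g, f g * ρ g⁻¹) • ρ
  have hp : p ∈ Submodule.span ℂ {ρ : G → ℂ | IsIrrChar G ρ} :=
    Submodule.sum_mem _ fun ρ hρ => Submodule.smul_mem _ _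
      (Submodule.subset_span (hfin.mem_toFinset.1 hρ))
  have hpc : p ∈ classFunSubmodule G :=
    Submodule.sum_mem _ fun ρ hρ => Submodule.smul_mem _ _
      (class_irr (hfin.mem_toFinset.1 hρ))
  have : f - p = 0 := by
    refine complete_aux _ (Submodule.sub_mem _ hf hpc) fun σ hσ => ?_
    have h2 : ∑ g, p g * σ g⁻¹ = ∑ g, f g * σ g⁻¹ := by
      simp only [p, Finset.sum_apply, Pi.smul_apply, smul_eq_mul, Finset.sum_mul (ι := G → ℂ)]
      rw [Finset.sum_comm]
      simp only [mul_assoc, ← Finset.mul_sum]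
      rw [Finset.sum_eq_single σ]
      · rw [ip_irr hσ hσ, if_pos rfl]
        field_simp
      · intro j hj hjn
        rw [ip_irr (hfin.mem_toFinset.1 hj) hσ, if_neg hjn]; simp
      · intro h; exact absurd (hfin.mem_toFinset.2 hσ) h
    simp only [Pi.sub_apply, sub_mul, Finset.sum_sub_distrib, h2, sub_self]
  rw [sub_eq_zero.1 this]
  exact hp

theorem dual_facts (Q : Type) [Group Q] [Finite Q] (q : Q) (hgen : ∀ x, x ∈ Subgroup.zpowers q) :
    Finite (Q →* ℂˣ) ∧ Nat.card (Q →* ℂˣ) = Nat.card Q ∧ ∀ x : Q, x ≠ 1 →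
      ∃ χ : Q →* ℂˣ, χ x ≠ 1 := by
  have : IsCyclic Q := ⟨q, hgen⟩
  let : CommGroup Q := IsCyclic.commGroup
  have e := (CommGroup.monoidHom_mulEquiv_of_hasEnoughRootsOfUnity Q ℂ).some
  exact ⟨Finite.of_equiv _ e.symm.toEquiv, Nat.card_congr e.toEquiv,
    fun x hx => CommGroup.exists_apply_ne_one_of_hasEnoughRootsOfUnity Q ℂ hx⟩

theorem dual_sum (Q : Type) [Group Q] [Finite Q] (q : Q) (hgen : ∀ x, x ∈ Subgroup.zpowers q)
    [Fintype (Q →* ℂˣ)] (x : Q) :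
    ∑ χ : Q →* ℂˣ, (χ x : ℂ) = open Classical in if x = 1 then (Nat.card Q : ℂ) else 0 := by
  obtain ⟨-, hc, hs⟩ := dual_facts Q q hgen
  split_ifs with h
  · subst h
    simp [← hc]
  · obtain ⟨χ, hχ⟩ := hs x h
    have hχ' : (χ x : ℂ) ≠ 1 := by simpa using hχ
    refine eq_zero_of_mul_eq_self_left hχ' ?_
    rw [Finset.mul_sum]
    exact Fintype.sum_bijective _ (Group.mulLeft_bijective χ) _ _ fun χ' => by simp

theorem coset_ip [Fintype G] (N : Subgroup G) [N.Normal] (q : G)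
    (hgen : ∀ x : G ⧸ N, x ∈ Subgroup.zpowers ((q : G ⧸ N))) [Fintype ((G ⧸ N) →* ℂˣ)]
    (ρ σ : G → ℂ) :
    (Nat.card (G ⧸ N) : ℂ) * ∑ g : G, (open Classical in if (g : G ⧸ N) = q then ρ g else 0) * σ g⁻¹
      = ∑ χ : (G ⧸ N) →* ℂˣ, (χ (q : G ⧸ N) : ℂ)⁻¹ * ∑ g, charMul N χ ρ g * σ g⁻¹ := by
  classical
  simp only [Finset.mul_sum]
  rw [Finset.sum_comm]
  refine Finset.sum_congr rfl fun g _ => ?_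
  have h := dual_sum (G ⧸ N) q hgen ((q : G ⧸ N)⁻¹ * g)
  have h2 : ∀ χ : (G ⧸ N) →* ℂˣ, (χ (q : G ⧸ N) : ℂ)⁻¹ * (charMul N χ ρ g * σ g⁻¹) =
      (χ ((q : G ⧸ N)⁻¹ * g) : ℂ) * (ρ g * σ g⁻¹) := by
    intro χ
    simp only [charMul, map_mul, map_inv, Units.val_mul, Units.val_inv_eq_inv_val]
    ring
  simp only [h2]
  rw [← Finset.sum_mul, h]
  by_cases hg : (g : G ⧸ N) = q
  · rw [if_pos hg, if_pos (by rw [hg]; simp)]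
  · rw [if_neg hg, if_neg (fun h => hg (inv_mul_eq_one.1 h).symm)]
    simp

theorem full_iff [Fintype G] (N : Subgroup G) [N.Normal] (q : G)
    (hgen : ∀ x : G ⧸ N, x ∈ Subgroup.zpowers ((q : G ⧸ N))) (ρ : G → ℂ) :
    (qhatOrbit N ρ).ncard = N.index ↔ Function.Injective (fun χ => charMul N χ ρ) := by
  obtain ⟨hf, hc, -⟩ := dual_facts (G ⧸ N) q hgen
  have ho : qhatOrbit N ρ = Set.range (fun χ => charMul N χ ρ) := by
    ext x; simp [qhatOrbit, eq_comm]
  have hi : N.index = Nat.card ((G ⧸ N) →* ℂˣ) := by rw [hc]; rfl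
  rw [ho, hi]
  constructor
  · intro h
    have := (Set.rangeFactorization_surjective
      (f := fun χ : (G ⧸ N) →* ℂˣ => charMul N χ ρ)).bijective_of_nat_card_le
      (by rw [← h]; exact le_of_eq rfl)
    exact Set.rangeFactorization_injective.1 this.1
  · exact Set.ncard_range_of_injective

theorem mem_Cset (N : Subgroup G) [N.Normal] (q : G)
    (hgen : ∀ x : G ⧸ N, x ∈ Subgroup.zpowers ((q : G ⧸ N))) (g : G) :
    ConjClasses.mk g ∈ Cset N q ↔ g ∈ coset N q := by
  have hcomm : ∀ a b : G ⧸ N, a * b = b * a := by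
    intro a b
    obtain ⟨m, rfl⟩ := Subgroup.mem_zpowers_iff.1 (hgen a)
    obtain ⟨n, rfl⟩ := Subgroup.mem_zpowers_iff.1 (hgen b)
    exact zpow_mul_comm _ _ _
  constructor
  · intro h
    exact h ConjClasses.mem_carrier_mk
  · intro h x hx
    rw [ConjClasses.mem_carrier_iff_mk_eq, ConjClasses.mk_eq_mk_iff_isConj, isConj_comm,
      isConj_iff] at hx
    obtain ⟨c, rfl⟩ := hx
    change ((c * g * c⁻¹ : G) : G ⧸ N) = q
    have h' : (g : G ⧸ N) = q := h
    rw [← h', QuotientGroup.mk_mul, QuotientGroup.mk_mul, hcomm (c : G ⧸ N), mul_assoc]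
    simp

theorem finrank_coset [Fintype G] (N : Subgroup G) [N.Normal] (q : G)
    (hgen : ∀ x : G ⧸ N, x ∈ Subgroup.zpowers ((q : G ⧸ N))) :
    Module.finrank ℂ (cosetClassFun N q) = (Cset N q).ncard := by
  classical
  let e : (Cset N q → ℂ) →ₗ[ℂ] cosetClassFun N q :=
    { toFun := fun F => ⟨fun g => if h : ConjClasses.mk g ∈ Cset N q then F ⟨_, h⟩ else 0, by
        constructor
        · intro g h
          have : ConjClasses.mk (h * g * h⁻¹) = ConjClasses.mk g :=
            (ConjClasses.mk_eq_mk_iff_isConj.2 (isConj_iff.2 ⟨h, rfl⟩)).symm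
          simp only [this]
        · intro g hg
          exact dif_neg (fun h => hg ((mem_Cset N q hgen g).1 h))⟩
      map_add' := fun a b => by
        ext g
        by_cases h : ConjClasses.mk g ∈ Cset N q <;> simp [h]
      map_smul' := fun a b => by
        ext g
        by_cases h : ConjClasses.mk g ∈ Cset N q <;> simp [h] }
  have hb : Function.Bijective e := by
    constructor
    · intro a b hab
      ext ⟨c, hc⟩
      induction c using Quotient.inductionOn with
      | h g =>
        have hc' : ConjClasses.mk g ∈ Cset N q := hc
        have := congrFun (congrArg Subtype.val hab) g
        simp only [e, LinearMap.coe_mk, AddHom.coe_mk, dif_pos hc'] at this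
        exact this
    · intro f
      refine ⟨fun c => f.1 (Quotient.out c.1), ?_⟩
      ext g
      by_cases h : ConjClasses.mk g ∈ Cset N q
      · simp only [e, LinearMap.coe_mk, AddHom.coe_mk, dif_pos h]
        have : ConjClasses.mk g = ConjClasses.mk (Quotient.out (ConjClasses.mk g)) :=
          (Quotient.out_eq (ConjClasses.mk g)).symm
        rw [ConjClasses.mk_eq_mk_iff_isConj, isConj_iff] at this
        obtain ⟨c, hc⟩ := this
        rw [← hc]
        exact f.2.1 g c
      · simp only [e, LinearMap.coe_mk, AddHom.coe_mk, dif_neg h]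
        exact (f.2.2 g (fun h' => h ((mem_Cset N q hgen g).2 h'))).symm
  have := Fintype.ofFinite (Cset N q)
  rw [← (LinearEquiv.ofBijective e hb).finrank_eq, Module.finrank_fintype_fun_eq_card,
    ← Nat.card_eq_fintype_card]
  rfl

end helpers2

/-- If `G ⧸ N` is cyclic generated by `qN`, the number of conjugacy
classes of `G` in `qN` equals the number of `Q̂`-orbits on `Irr G` of length `(G:N)`. -/
theorem conjClasses_coset_card_eq_full_orbits_card
    (G : Type) [Group G] [Fintype G] (N : Subgroup G) [N.Normal] (q : G)
    (hgen : ∀ x : G ⧸ N, x ∈ Subgroup.zpowers ((q : G ⧸ N))) :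
    (Cset N q).ncard =
      {S : Set (G → ℂ) | (∃ ρ, IsIrrChar G ρ ∧ S = qhatOrbit N ρ) ∧
        S.ncard = N.index}.ncard := by
  classical
  obtain ⟨hfinQ, hcQ, -⟩ := dual_facts (G ⧸ N) q hgen
  have := Fintype.ofFinite ((G ⧸ N) →* ℂˣ)
  have hG0 : (Nat.card G : ℂ) ≠ 0 := by exact_mod_cast Nat.card_pos.ne'
  set T : Set (Set (G → ℂ)) := {S : Set (G → ℂ) | (∃ ρ, IsIrrChar G ρ ∧ S = qhatOrbit N ρ) ∧
        S.ncard = N.index} with hT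
  have hr : ∀ S : T, ∃ ρ, IsIrrChar G ρ ∧ (S : Set (G → ℂ)) = qhatOrbit N ρ := fun S => S.2.1
  choose r hrI hrS using hr
  have hself : ∀ ρ : G → ℂ, charMul N 1 ρ = ρ := fun ρ => by funext g; simp [charMul]
  have hinj : ∀ S : T, Function.Injective (fun χ => charMul N χ (r S)) := fun S =>
    (full_iff N q hgen (r S)).1 (by rw [← hrS]; exact S.2.2)
  let P : (G → ℂ) →ₗ[ℂ] (G → ℂ) :=
    { toFun := fun f g => if (g : G ⧸ N) = q then f g else 0
      map_add' := fun a b => by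
        funext g
        by_cases h : (g : G ⧸ N) = q <;> simp [h]
      map_smul' := fun a b => by
        funext g
        by_cases h : (g : G ⧸ N) = q <;> simp [h] }
  have hPc : ∀ f ∈ classFunSubmodule G, P f ∈ cosetClassFun N q := by
    intro f hf
    refine ⟨fun g h => ?_, fun g hg => if_neg hg⟩
    have e : ((h * g * h⁻¹ : G) : G ⧸ N) = q ↔ (g : G ⧸ N) = q := by
      have h1 := mem_Cset N q hgen g
      have h2 := mem_Cset N q hgen (h * g * h⁻¹)
      have h3 : ConjClasses.mk (h * g * h⁻¹) = ConjClasses.mk g :=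
        (ConjClasses.mk_eq_mk_iff_isConj.2 (isConj_iff.2 ⟨h, rfl⟩)).symm
      rw [h3] at h2
      exact h2.symm.trans h1
    change (if ((h * g * h⁻¹ : G) : G ⧸ N) = q then f (h * g * h⁻¹) else 0) = 
      (if (g : G ⧸ N) = q then f g else 0)
    simp only [e, hf g h]
  let v : T → (G → ℂ) := fun S => P (r S)
  have hip : ∀ S S' : T, (Nat.card (G ⧸ N) : ℂ) * ∑ g, v S g * r S' g⁻¹ =
      if S = S' then (Nat.card G : ℂ) else 0 := by
    intro S S'
    refine (coset_ip N q hgen (r S) (r S')).trans ?_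
    split_ifs with h
    · subst h
      rw [Finset.sum_eq_single 1]
      · rw [hself, ip_irr (hrI S) (hrI S), if_pos rfl]; simp
      · intro χ _ hχ
        rw [ip_irr (irr_twist N χ (hrI S)) (hrI S), if_neg, mul_zero]
        intro h
        exact hχ (hinj S (h.trans (hself _).symm))
      · intro h; exact absurd (Finset.mem_univ _) h
    · refine Finset.sum_eq_zero fun χ _ => ?_
      rw [ip_irr (irr_twist N χ (hrI S)) (hrI S'), if_neg, mul_zero]
      intro h'
      apply h
      apply Subtype.ext
      rw [hrS, hrS]
      ext x
      constructor
      · rintro ⟨ψ, rfl⟩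
        refine ⟨ψ * χ⁻¹, ?_⟩
        rw [← h']
        funext g
        have hne : (χ (g : G ⧸ N) : ℂ) ≠ 0 := Units.ne_zero _
        simp [charMul]
        field_simp
      · rintro ⟨ψ, rfl⟩
        refine ⟨ψ * χ, ?_⟩
        rw [← h']
        funext g
        simp [charMul, mul_assoc]
  have hli : LinearIndependent ℂ v := by
    rw [linearIndependent_iff']
    intro s c hc i hi
    have h1 : ∑ g, (∑ j ∈ s, c j • v j) g * r i g⁻¹ = 0 := by
      rw [hc]; simp
    simp only [Finset.sum_apply, Pi.smul_apply, smul_eq_mul, Finset.sum_mul] at h1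
    rw [Finset.sum_comm] at h1
    simp only [mul_assoc, ← Finset.mul_sum] at h1
    replace h1 := congrArg (fun z => (Nat.card (G ⧸ N) : ℂ) * z) h1
    simp only [Finset.mul_sum (ι := T), mul_left_comm _ (c _), hip] at h1
    simpa [hi, hG0] using h1
  have hspan : Submodule.span ℂ (Set.range v) = cosetClassFun N q := by
    apply le_antisymm
    · rw [Submodule.span_le]
      rintro _ ⟨S, rfl⟩
      exact hPc _ (class_irr (hrI S))
    · intro f hf
      have hPf : P f = f := by
        funext g
        by_cases h : (g : G ⧸ N) = q
        · exact if_pos h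
        · exact (if_neg h).trans (hf.2 g h).symm
      rw [← hPf]
      have : f ∈ Submodule.span ℂ {ρ : G → ℂ | IsIrrChar G ρ} := span_irr hf.1
      have hle : Submodule.span ℂ {ρ : G → ℂ | IsIrrChar G ρ} ≤
          (Submodule.span ℂ (Set.range v)).comap P := by
        rw [Submodule.span_le]
        intro ρ hρ
        change P ρ ∈ Submodule.span ℂ (Set.range v)
        by_cases hz : ∀ g : G, (g : G ⧸ N) = q → ρ g = 0
        · have : P ρ = 0 := by
            funext g
            by_cases h : (g : G ⧸ N) = q
            · exact (if_pos h).trans (hz g h)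
            · exact if_neg h
          rw [this]
          exact Submodule.zero_mem _
        · push Not at hz
          obtain ⟨g, hg, hgz⟩ := hz
          have hfull : (qhatOrbit N ρ).ncard = N.index := by
            rw [full_iff N q hgen]
            intro χ ψ h
            rw [MonoidHom.eq_iff_eq_on_generator hgen]
            have := congrFun h g
            simp only [charMul, hg] at this
            exact Units.ext (mul_right_cancel₀ hgz this)
          let S : T := ⟨qhatOrbit N ρ, ⟨ρ, hρ, rfl⟩, hfull⟩
          have hm : ρ ∈ (S : Set (G → ℂ)) := ⟨1, (hself ρ).symm⟩
          rw [hrS] at hm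
          obtain ⟨χ, hχ⟩ := hm
          have : P ρ = (χ (q : G ⧸ N) : ℂ) • v S := by
            funext g
            by_cases h : (g : G ⧸ N) = q
            · refine (if_pos h).trans ?_
              have e : v S g = r S g := if_pos h
              rw [Pi.smul_apply, e, ← h]
              exact congrFun hχ g
            · refine (if_neg h).trans ?_
              have e : v S g = 0 := if_neg h
              rw [Pi.smul_apply, e, smul_zero]
          rw [this]
          exact Submodule.smul_mem _ _ (Submodule.subset_span ⟨S, rfl⟩)
      exact hle this
  have hTf : Finite T := hli.finite
  have := Fintype.ofFinite T
  rw [← finrank_coset N q hgen, ← hspan, finrank_span_eq_card hli, ← Nat.card_eq_fintype_card]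
  rfl
end

section
/- Let G be a finite group and N a normal subgroup such that G/N is cyclic, generated by the coset of q ∈ G. Then the number of conjugacy classes of G contained in qN equals the number of irreducible complex characters τ of N that extend to a character of G (i.e. for which there exists an irreducible character ρ of G with Res_N ρ = τ). -/
open scoped BigOperators

variable {G : Type} [Group G]

set_option linter.unusedSectionVars false

section helpers
variable {H : Type} [Group H] [Fintype H]

def NormOne {V : Type} [AddCommGroup V] [Module ℂ V] (ρ : Representation ℂ H V) : Prop :=
  ∑ g : H, ρ.character g * ρ.character g⁻¹ = Nat.card H

variable {V W : Type} [AddCommGroup V] [Module ℂ V] [FiniteDimensional ℂ V]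
  [AddCommGroup W] [Module ℂ W] [FiniteDimensional ℂ W]
  {ρ : Representation ℂ H V} {σ : Representation ℂ H W}

lemma NormOne.simple (h : NormOne ρ) : CategoryTheory.Simple (FDRep.of ρ) :=
  (FDRep.simple_iff_char_is_norm_one _).2 h

lemma normOne_of_simple (U : FDRep ℂ H) (h : CategoryTheory.Simple U) : NormOne U.ρ :=
  (FDRep.simple_iff_char_is_norm_one _).1 h

lemma card_ne : (Nat.card H : ℂ) ≠ 0 := by simp

lemma NormOne.finrank (h : NormOne ρ) :
    Module.finrank ℂ (Representation.IntertwiningMap ρ ρ) = 1 := by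
  have := invertibleOfNonzero (card_ne (H := H))
  have e := Representation.card_inv_mul_sum_char_mul_char_eq_finrank ρ ρ
  rw [h, inv_mul_cancel₀ card_ne] at e
  exact_mod_cast e.symm

lemma NormOne.nontrivial (h : NormOne ρ) : Nontrivial V := by
  by_contra hc
  rw [not_nontrivial_iff_subsingleton] at hc
  have h0 : ∀ g, ρ.character g = 0 := fun g => by
    rw [Representation.character, Subsingleton.elim (ρ g) 0, map_zero]
  unfold NormOne at h
  simp only [h0, mul_zero, Finset.sum_const_zero] at h
  exact card_ne h.symm

lemma NormOne.schur (h : NormOne ρ) (A : V →ₗ[ℂ] V) (hA : ∀ g, A ∘ₗ ρ g = ρ g ∘ₗ A) :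
    ∃ c : ℂ, A = c • LinearMap.id := by
  have := h.nontrivial
  let I : Representation.IntertwiningMap ρ ρ := ⟨LinearMap.id, fun g => rfl⟩
  have hI : I ≠ 0 := by
    intro h0
    have := congrArg (fun f => f.toLinearMap) h0
    obtain ⟨v, hv⟩ := exists_ne (0 : V)
    exact hv (LinearMap.congr_fun this v)
  obtain ⟨c, hc⟩ := (finrank_eq_one_iff_of_nonzero' I hI).1 h.finrank ⟨A, hA⟩
  exact ⟨c, (congrArg (fun f => f.toLinearMap) hc).symm⟩

lemma NormOne.exists_equiv (h : NormOne ρ) (h' : NormOne σ) (e : ρ.character = σ.character) :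
    ∃ e : V ≃ₗ[ℂ] W, ∀ g, σ g = e.conj (ρ g) := by
  classical
  have := invertibleOfNonzero (card_ne (H := H))
  have := h.simple
  have := h'.simple
  have key := FDRep.char_orthonormal (FDRep.of ρ) (FDRep.of σ)
  have e1 : ∑ g : H, (FDRep.of ρ).character g * (FDRep.of σ).character g⁻¹ = Nat.card H := by
    rw [show (FDRep.of σ).character = (FDRep.of ρ).character from e.symm]
    exact h
  rw [e1, inv_mul_cancel₀ card_ne] at key
  split_ifs at key with hne
  · obtain ⟨i⟩ := hne
    exact ⟨FDRep.isoToLinearEquiv i, fun g => FDRep.Iso.conj_ρ i g⟩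
  · simp at key

lemma NormOne.hom_zero (h : NormOne ρ) (h' : NormOne σ) (e : ρ.character ≠ σ.character)
    (A : V →ₗ[ℂ] W) (hA : ∀ g, A ∘ₗ ρ g = σ g ∘ₗ A) : A = 0 := by
  classical
  have := invertibleOfNonzero (card_ne (H := H))
  have := h.simple
  have := h'.simple
  have key := FDRep.char_orthonormal (FDRep.of σ) (FDRep.of ρ)
  have k2 := Representation.card_inv_mul_sum_char_mul_char_eq_finrank ρ σ
  split_ifs at key with hne
  · obtain ⟨i⟩ := hne
    exact absurd (FDRep.char_iso i).symm e
  · have : ((Module.finrank ℂ (Representation.IntertwiningMap ρ σ) : ℕ) : ℂ) = 0 := by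
      rw [← k2]; exact key
    have : Module.finrank ℂ (Representation.IntertwiningMap ρ σ) = 0 := by exact_mod_cast this
    have hfin : Module.Finite ℂ (Representation.IntertwiningMap ρ σ) :=
      FiniteDimensional.of_injective
        (⟨⟨fun f => f.toLinearMap, fun _ _ => rfl⟩, fun _ _ => rfl⟩ :
          Representation.IntertwiningMap ρ σ →ₗ[ℂ] (V →ₗ[ℂ] W))
        (Representation.IntertwiningMap.toLinearMap_injective ρ σ)
    rw [Module.finrank_eq_zero_iff_of_free] at this
    exact congrArg (fun f => f.toLinearMap)
      (Subsingleton.elim (⟨A, hA⟩ : Representation.IntertwiningMap ρ σ) 0)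

lemma exists_compl (ρ : Representation ℂ H V) (p : Subrepresentation ρ) :
    ∃ q : Subrepresentation ρ, IsCompl p.toSubmodule q.toSubmodule := by
  have : Representation.IsSemisimpleRepresentation ρ := inferInstance
  obtain ⟨q, hq⟩ := exists_isCompl p
  refine ⟨q, ?_, ?_⟩
  · rw [disjoint_iff]
    have := congrArg Subrepresentation.toSubmodule (disjoint_iff.1 hq.1)
    exact this
  · rw [codisjoint_iff]
    have := congrArg Subrepresentation.toSubmodule (codisjoint_iff.1 hq.2)
    exact this

lemma sub_of_schur (h : ∀ A : V →ₗ[ℂ] V, (∀ g, A ∘ₗ ρ g = ρ g ∘ₗ A) → ∃ c : ℂ, A = c • LinearMap.id)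
    (p : Subrepresentation ρ) :
    p.toSubmodule = ⊥ ∨ p.toSubmodule = ⊤ := by
  obtain ⟨q, hq⟩ := exists_compl ρ p
  obtain ⟨c, hc⟩ := h (Submodule.projection _ _ hq) (by
    intro g
    ext v
    obtain ⟨a, ha, b, hb, rfl⟩ : ∃ a ∈ p.toSubmodule, ∃ b ∈ q.toSubmodule, a + b = v :=
      Submodule.mem_sup.1 (hq.sup_eq_top ▸ Submodule.mem_top)
    have h1 : ∀ x ∈ p.toSubmodule, Submodule.projection _ _ hq x = x := fun x hx =>
      Submodule.projection_apply_left hq ⟨x, hx⟩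
    have h2 : ∀ x ∈ q.toSubmodule, Submodule.projection _ _ hq x = 0 := fun x hx => by
      simpa using hx
    simp [h1 a ha, h2 b hb, h1 _ (p.apply_mem_toSubmodule g ha),
      h2 _ (q.apply_mem_toSubmodule g hb)])
  by_cases hc0 : c = 0
  · left
    rw [eq_bot_iff]
    intro x hx
    have := Submodule.projection_apply_left hq ⟨x, hx⟩
    rw [hc, hc0] at this
    simpa using this.symm
  · right
    rw [eq_top_iff]
    intro x _
    have : Submodule.projection _ _ hq x ∈ p.toSubmodule := by simp
    rw [hc] at this
    exact (Submodule.smul_mem_iff _ hc0).1 this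

lemma NormOne.sub (h : NormOne ρ) (p : Subrepresentation ρ) :
    p.toSubmodule = ⊥ ∨ p.toSubmodule = ⊤ := sub_of_schur h.schur p

lemma normOne_of_sub [Nontrivial V] (ρ : Representation ℂ H V)
    (h : ∀ p : Subrepresentation ρ, p.toSubmodule = ⊥ ∨ p.toSubmodule = ⊤) : NormOne ρ := by
  classical
  have : Nontrivial (Subrepresentation ρ) := ⟨⊥, ⊤, fun e => by
    have : (⊥ : Submodule ℂ V) = ⊤ := congrArg Subrepresentation.toSubmodule e
    exact bot_ne_top this⟩
  have : ρ.IsIrreducible := ⟨fun p => (h p).imp (fun e => Subrepresentation.toSubmodule_injective e)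
    (fun e => Subrepresentation.toSubmodule_injective e)⟩
  have := invertibleOfNonzero (card_ne (H := H))
  have k := Representation.char_orthonormal ρ ρ
  rw [if_pos ⟨Representation.Equiv.refl ρ⟩, inv_mul_eq_one₀ card_ne] at k
  exact k.symm

lemma op_zero (f : H → ℂ) (hf : ∀ g h, f (h * g * h⁻¹) = f g)
    (hz : ∀ (V : Type) [AddCommGroup V] [Module ℂ V] [FiniteDimensional ℂ V]
      (ρ : Representation ℂ H V), NormOne ρ → ∑ g, f g * ρ.character g = 0) (n : ℕ) :
    ∀ (V : Type) [AddCommGroup V] [Module ℂ V] [FiniteDimensional ℂ V]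
      (ρ : Representation ℂ H V), Module.finrank ℂ V = n → ∑ g, f g • ρ g = 0 := by
  induction n using Nat.strong_induction_on with
  | _ n ih =>
  intro V _ _ _ ρ hn
  cases subsingleton_or_nontrivial V
  · exact Subsingleton.elim _ _
  by_cases hp : ∀ p : Subrepresentation ρ, p.toSubmodule = ⊥ ∨ p.toSubmodule = ⊤
  · have h1 := normOne_of_sub ρ hp
    obtain ⟨c, hc⟩ := h1.schur (∑ g, f g • ρ g) (by
      intro k
      rw [← Module.End.mul_eq_comp, ← Module.End.mul_eq_comp, Finset.sum_mul, Finset.mul_sum]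
      refine Fintype.sum_equiv (MulAut.conj k⁻¹).toEquiv _ _ fun g => ?_
      have := hf g k⁻¹
      simp only [MulEquiv.toEquiv_eq_coe, EquivLike.coe_coe, MulAut.conj_apply, this,
        smul_mul_assoc, mul_smul_comm]
      congr 1
      rw [← map_mul, ← map_mul]
      congr 1
      group)
    have ht := congrArg (LinearMap.trace ℂ V) hc
    simp only [map_sum, map_smul, smul_eq_mul, LinearMap.trace_id] at ht
    have hz' := hz V ρ h1
    simp only [Representation.character] at hz'
    rw [hz'] at ht
    have : (Module.finrank ℂ V : ℂ) ≠ 0 := by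
      exact_mod_cast (Module.finrank_pos (R := ℂ) (M := V)).ne'
    have : c = 0 := by
      rcases mul_eq_zero.1 ht.symm with h | h
      · exact h
      · exact absurd h this
    rw [hc, this, zero_smul]
  · push Not at hp
    obtain ⟨p, hp0, hp1⟩ := hp
    have aux : ∀ p : Subrepresentation ρ, p.toSubmodule ≠ ⊤ →
        ∀ x ∈ p.toSubmodule, (∑ g, f g • ρ g) x = 0 := by
      intro p hp1 x hx
      have := ih _ (hn ▸ Submodule.finrank_lt hp1) p.toSubmodule p.toRepresentation rfl
      have := congrArg Subtype.val (LinearMap.congr_fun this ⟨x, hx⟩)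
      simp only [LinearMap.sum_apply, LinearMap.smul_apply, LinearMap.zero_apply,
        Submodule.coe_sum, Submodule.coe_smul, Submodule.coe_zero] at this ⊢
      exact this
    obtain ⟨q, hq⟩ := exists_compl ρ p
    have hq1 : q.toSubmodule ≠ ⊤ := by
      intro h
      rw [h] at hq
      exact hp0 (by simpa using hq.inf_eq_bot)
    ext v
    obtain ⟨a, ha, b, hb, rfl⟩ : ∃ a ∈ p.toSubmodule, ∃ b ∈ q.toSubmodule, a + b = v :=
      Submodule.mem_sup.1 (hq.sup_eq_top ▸ Submodule.mem_top)
    rw [map_add, aux p hp1 a ha, aux q hq1 b hb]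
    simp

def regRep : Representation ℂ H (H → ℂ) where
  toFun g := LinearMap.funLeft ℂ ℂ (fun x => x * g)
  map_one' := by ext; simp [LinearMap.funLeft]
  map_mul' a b := by ext; simp [LinearMap.funLeft, mul_assoc]

lemma regRep_apply (g : H) (φ : H → ℂ) (x : H) : regRep g φ x = φ (x * g) := rfl

lemma complete (f : H → ℂ) (hf : ∀ g h, f (h * g * h⁻¹) = f g)
    (hz : ∀ (V : Type) [AddCommGroup V] [Module ℂ V] [FiniteDimensional ℂ V]
      (ρ : Representation ℂ H V), NormOne ρ → ∑ g, f g * ρ.character g⁻¹ = 0) : f = 0 := by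
  classical
  have := op_zero (fun g => f g⁻¹) (fun g h => by rw [← hf g⁻¹ h]; congr 1; group)
    (fun V _ _ _ ρ h => by
      rw [← hz V ρ h]
      exact Fintype.sum_equiv (Equiv.inv H) _ _ fun g => by simp) _ (H → ℂ) regRep rfl
  ext k
  have := congrFun (LinearMap.congr_fun this (Pi.single k⁻¹ 1)) 1
  simp only [LinearMap.sum_apply, LinearMap.smul_apply, Finset.sum_apply, Pi.smul_apply,
    regRep_apply, one_mul, smul_eq_mul, LinearMap.zero_apply, Pi.zero_apply] at this
  simpa [Pi.single_apply] using this

end helpers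

section second
variable [Fintype G] {N : Subgroup G} [N.Normal] {q : G}
variable {V W : Type} [AddCommGroup V] [Module ℂ V] [FiniteDimensional ℂ V]
  [AddCommGroup W] [Module ℂ W] [FiniteDimensional ℂ W]
  {ρ : Representation ℂ G V} {σ : Representation ℂ G W}

def resRep (N : Subgroup G) (ρ : Representation ℂ G V) : Representation ℂ N V :=
  MonoidHom.comp ρ N.subtype

lemma resRep_apply (ρ : Representation ℂ G V) (n : N) : resRep N ρ n = ρ n := rfl

lemma mem_coset_iff {g : G} : g ∈ coset N q ↔ ∃ n : N, g = q * n := by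
  unfold coset
  rw [Set.mem_ofPred_eq, eq_comm, QuotientGroup.eq]
  constructor
  · intro h
    exact ⟨⟨_, h⟩, by simp⟩
  · rintro ⟨n, rfl⟩
    simp

lemma mem_of_gen (hgen : ∀ x : G ⧸ N, x ∈ Subgroup.zpowers ((q : G ⧸ N))) (S : Subgroup G)
    (hN : ∀ n : N, (n : G) ∈ S) (hq : q ∈ S) (g : G) : g ∈ S := by
  obtain ⟨k, hk⟩ := Subgroup.mem_zpowers_iff.1 (hgen g)
  rw [← QuotientGroup.mk_zpow, QuotientGroup.eq] at hk
  have := S.mul_mem (S.zpow_mem hq k) (hN ⟨_, hk⟩)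
  simpa using this

/-- elements quasi-commuting with `B` -/
def quasiComm (ρ : Representation ℂ G V) (B : Module.End ℂ V) : Subgroup G where
  carrier := {g | ∃ μ : ℂ, μ ≠ 0 ∧ B * ρ g = μ • (ρ g * B)}
  one_mem' := ⟨1, one_ne_zero, by simp⟩
  mul_mem' := by
    rintro a b ⟨μ, h0, h⟩ ⟨ν, h0', h'⟩
    refine ⟨μ * ν, mul_ne_zero h0 h0', ?_⟩
    rw [map_mul, ← mul_assoc, h, smul_mul_assoc, mul_assoc, h', mul_smul_comm, smul_smul, mul_assoc]
  inv_mem' := by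
    rintro a ⟨μ, h0, h⟩
    refine ⟨μ⁻¹, inv_ne_zero h0, ?_⟩
    have h1 : ρ a * ρ a⁻¹ = 1 := by rw [← map_mul]; simp
    have h2 : ρ a⁻¹ * ρ a = 1 := by rw [← map_mul]; simp
    calc B * ρ a⁻¹ = μ⁻¹ • (ρ a⁻¹ * (μ • (ρ a * B)) * ρ a⁻¹) := by
          rw [mul_smul_comm, ← mul_assoc, h2, one_mul, smul_mul_assoc, smul_smul,
            inv_mul_cancel₀ h0, one_smul]
      _ = μ⁻¹ • (ρ a⁻¹ * B) := by
          rw [← h, mul_assoc, mul_assoc B, h1, mul_one]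

/-- elements commuting with `B` -/
def realComm (ρ : Representation ℂ G V) (B : Module.End ℂ V) : Subgroup G where
  carrier := {g | B * ρ g = ρ g * B}
  one_mem' := by simp
  mul_mem' := by
    intro a b h h'
    simp only [Set.mem_ofPred_eq] at *
    rw [map_mul, ← mul_assoc, h, mul_assoc, h', mul_assoc]
  inv_mem' := by
    intro a h
    simp only [Set.mem_ofPred_eq] at *
    have h1 : ρ a * ρ a⁻¹ = 1 := by rw [← map_mul]; simp
    have h2 : ρ a⁻¹ * ρ a = 1 := by rw [← map_mul]; simp
    calc B * ρ a⁻¹ = ρ a⁻¹ * (ρ a * B) * ρ a⁻¹ := by rw [← mul_assoc, h2, one_mul]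
      _ = ρ a⁻¹ * B := by rw [← h, mul_assoc, mul_assoc B, h1, mul_one]

/-- conjugation by `ρ q` -/
def conjOp (ρ : Representation ℂ G V) (q : G) : Module.End ℂ (Module.End ℂ V) where
  toFun A := ρ q * A * ρ q⁻¹
  map_add' := by intros; rw [mul_add, add_mul]
  map_smul' := by intros; simp

lemma conjOp_apply (A : Module.End ℂ V) : conjOp ρ q A = ρ q * A * ρ q⁻¹ := rfl

lemma conjOp_pow (k : ℕ) (A : Module.End ℂ V) :
    ((conjOp ρ q) ^ k) A = ρ (q ^ k) * A * ρ (q ^ k)⁻¹ := by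
  induction k with
  | zero => simp
  | succ k ih =>
    rw [pow_succ', Module.End.mul_apply, ih, conjOp_apply, pow_succ', mul_inv_rev, map_mul, map_mul]
    simp only [mul_assoc]

/-- an abstract eigenvector lemma -/
lemma exists_eig {E : Type*} [AddCommGroup E] [Module ℂ E] [FiniteDimensional ℂ E]
    (c : Module.End ℂ E) (S : Submodule ℂ E) (hS : ∀ x ∈ S, c x ∈ S) (m : ℕ) (hm : 0 < m)
    (hc : c ^ m = 1) (x : E) (hx : x ∈ S) (hne : c x ≠ x) :
    ∃ v ∈ S, v ≠ 0 ∧ ∃ l : ℂ, l ≠ 1 ∧ c v = l • v := by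
  let R : Submodule ℂ E := S.map (c - 1)
  have hR : ∀ y ∈ R, c y ∈ R := by
    rintro y ⟨w, hw, rfl⟩
    exact ⟨c w, hS w hw, by simp⟩
  have : Nontrivial R := ⟨⟨⟨(c - 1) x, ⟨x, hx, rfl⟩⟩, 0, fun h => hne (by
    have := congrArg Subtype.val h
    simpa [sub_eq_zero] using this)⟩⟩
  obtain ⟨l, hl⟩ := Module.End.exists_eigenvalue (c.restrict hR)
  obtain ⟨v, hv⟩ := hl.exists_hasEigenvector
  have h1 := congrArg Subtype.val hv.apply_eq_smul
  have h2 : (v : E) ≠ 0 := fun h => hv.2 (Subtype.ext h)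
  obtain ⟨w, hw, hwv⟩ := v.2
  have h1' : c (v : E) = l • (v : E) := h1
  have hwv' : c w = w + v := by rw [← hwv]; simp
  refine ⟨v, ?_, h2, l, ?_, h1'⟩
  · rw [← hwv]
    exact S.sub_mem (hS w hw) hw
  · rintro rfl
    rw [one_smul] at h1'
    have key : ∀ k : ℕ, (c ^ k) w = w + k • (v : E) := by
      intro k
      induction k with
      | zero => simp
      | succ k ih =>
        rw [pow_succ', Module.End.mul_apply, ih, map_add, map_nsmul, h1', hwv', succ_nsmul']
        abel
    have := key m
    rw [hc, Module.End.one_apply, left_eq_add, ← Nat.cast_smul_eq_nsmul ℂ, smul_eq_zero] at this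
    rcases this with h | h
    · exact hm.ne' (by exact_mod_cast h)
    · exact h2 h

lemma normOne_res [Fintype N] (hgen : ∀ x : G ⧸ N, x ∈ Subgroup.zpowers ((q : G ⧸ N)))
    (h : NormOne ρ) (g : G) (hg : g ∈ coset N q) (hne : ρ.character g⁻¹ ≠ 0) :
    NormOne (resRep N ρ) := by
  have := h.nontrivial
  refine normOne_of_sub _ (sub_of_schur fun A hA => ?_)
  have hA' : ∀ n : N, A * ρ n = ρ n * A := hA
  apply h.schur
  suffices hq : conjOp ρ q A = A by
    refine mem_of_gen hgen (realComm ρ A) hA' ?_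
    change A * ρ q = ρ q * A
    conv_lhs => rw [← hq, conjOp_apply, mul_assoc, ← map_mul]
    simp
  by_contra hq
  let S : Submodule ℂ (Module.End ℂ V) :=
    { carrier := {B | ∀ n : N, B * ρ n = ρ n * B}
      add_mem' := by
        intro a b ha hb n
        rw [add_mul, mul_add, ha n, hb n]
      zero_mem' := by intro n; simp
      smul_mem' := by
        intro c a ha n
        rw [smul_mul_assoc, mul_smul_comm, ha n] }
  have hS : ∀ B ∈ S, conjOp ρ q B ∈ S := by
    intro B hB n
    have hn : q⁻¹ * n * q ∈ N := by
      simpa using (inferInstance : N.Normal).conj_mem n n.2 q⁻¹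
    have e := hB ⟨_, hn⟩
    simp only at e
    rw [conjOp_apply]
    calc ρ q * B * ρ q⁻¹ * ρ n = ρ q * (B * ρ (q⁻¹ * n * q)) * ρ q⁻¹ := by
          simp only [mul_assoc, ← map_mul]; simp
      _ = _ := by
          rw [e]; simp only [← mul_assoc, ← map_mul]; simp
  obtain ⟨B, hB, hB0, l, hl, hBl⟩ := exists_eig (conjOp ρ q) S hS (orderOf q) (orderOf_pos q)
    (by ext1 A; rw [conjOp_pow, pow_orderOf_eq_one]; simp) A hA' hq
  have hl0 : l ≠ 0 := by
    rintro rfl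
    rw [zero_smul, conjOp_apply] at hBl
    apply hB0
    calc B = ρ q⁻¹ * (ρ q * B * ρ q⁻¹) * ρ q := by
          simp only [← mul_assoc, ← map_mul]
          simp only [mul_assoc, ← map_mul]
          simp
      _ = 0 := by rw [hBl]; simp
  have hqB : ρ q * B = l • (B * ρ q) := by
    calc ρ q * B = ρ q * B * ρ q⁻¹ * ρ q := by
          simp only [mul_assoc, ← map_mul]; simp
      _ = l • (B * ρ q) := by rw [← conjOp_apply, hBl, smul_mul_assoc]
  have hquasi : ∀ g, g ∈ quasiComm ρ B := mem_of_gen hgen _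
    (fun n => ⟨1, one_ne_zero, by rw [one_smul]; exact hB n⟩)
    ⟨l⁻¹, inv_ne_zero hl0, by rw [hqB, smul_smul, inv_mul_cancel₀ hl0, one_smul]⟩
  have hker := h.sub ⟨LinearMap.ker B, fun g v hv => by
    obtain ⟨μ, -, hμ⟩ := hquasi g
    rw [LinearMap.mem_ker] at hv ⊢
    have := LinearMap.congr_fun hμ v
    simpa [hv] using this⟩
  have hinj : Function.Injective B := by
    rcases hker with h | h
    · exact LinearMap.ker_eq_bot.1 h
    · exact absurd (LinearMap.ker_eq_top.1 h) hB0
  let e : V ≃ₗ[ℂ] V := LinearEquiv.ofInjectiveEndo B hinj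
  obtain ⟨n, rfl⟩ := mem_coset_iff.1 hg
  have h1 : ρ (q * n) * B = l • (B * ρ (q * n)) := by
    rw [map_mul, mul_assoc, ← hB n, ← mul_assoc, hqB, smul_mul_assoc, mul_assoc]
  have h2 : B * ρ (q * n)⁻¹ = l • (ρ (q * n)⁻¹ * B) := by
    calc B * ρ (q * n)⁻¹ = ρ (q * n)⁻¹ * (ρ (q * n) * B) * ρ (q * n)⁻¹ := by
          simp only [← mul_assoc, ← map_mul]; simp
      _ = _ := by
          rw [h1]
          simp only [mul_smul_comm, smul_mul_assoc, mul_assoc]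
          rw [← map_mul]; simp
  have h3 : e.conj (ρ (q * n)⁻¹) = l • ρ (q * n)⁻¹ := by
    ext v
    obtain ⟨w, rfl⟩ := e.surjective v
    rw [LinearEquiv.conj_apply_apply, e.symm_apply_apply]
    exact LinearMap.congr_fun h2 w
  have h4 := congrArg (LinearMap.trace ℂ V) h3
  rw [LinearMap.trace_conj', map_smul, smul_eq_mul] at h4
  exact hl (mul_right_cancel₀ hne (by rw [one_mul]; exact h4.symm))

lemma char_scalar [Fintype N] (h : NormOne (resRep N ρ)) (h' : NormOne (resRep N σ))
    (e : (resRep N ρ).character = (resRep N σ).character) :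
    ∃ c : ℂ, ∀ g ∈ coset N q, ρ.character g⁻¹ = c * σ.character g⁻¹ := by
  obtain ⟨e, he⟩ := h.exists_equiv h' e
  let s : G →* Module.End ℂ V := (e.symm.conjRingEquiv : _ →* _).comp σ
  have hs : ∀ g, s g = e.symm.conj (σ g) := fun g => rfl
  have hsn : ∀ n : N, s n = ρ n := by
    intro n
    rw [hs, ← resRep_apply σ, he]
    ext v
    simp [resRep_apply]
  obtain ⟨c, hc⟩ := h.schur (s q * ρ q⁻¹) (by
    intro n
    change s q * ρ q⁻¹ * ρ n = ρ n * (s q * ρ q⁻¹)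
    have hn : q⁻¹ * n * q ∈ N := by
      simpa using (inferInstance : N.Normal).conj_mem n n.2 q⁻¹
    have e := hsn ⟨_, hn⟩
    simp only at e
    calc s q * ρ q⁻¹ * ρ n = s q * ρ (q⁻¹ * n * q) * ρ q⁻¹ := by
          simp only [mul_assoc, ← map_mul]; simp
      _ = _ := by
          rw [← e, ← hsn n]; simp only [← mul_assoc, ← map_mul]; simp)
  have hq : s q = c • ρ q := by
    calc s q = s q * ρ q⁻¹ * ρ q := by rw [mul_assoc, ← map_mul]; simp
      _ = _ := by rw [hc, smul_mul_assoc]; rfl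
  refine ⟨c, fun g hg => ?_⟩
  obtain ⟨n, rfl⟩ := mem_coset_iff.1 hg
  have h1 : s (q * n) = c • ρ (q * n) := by
    rw [map_mul, hq, hsn, map_mul, smul_mul_assoc]
  have h2 : ρ (q * n)⁻¹ = c • s (q * n)⁻¹ := by
    calc ρ (q * n)⁻¹ = s (q * n)⁻¹ * s (q * n) * ρ (q * n)⁻¹ := by rw [← map_mul]; simp
      _ = _ := by
        rw [h1, mul_smul_comm, smul_mul_assoc, mul_assoc, ← map_mul]; simp
  rw [Representation.character, h2, map_smul, hs, LinearMap.trace_conj']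
  rfl

lemma sum_linHom [Fintype N] : ∑ n : N, σ.character (q * n) * ρ.character (q * n)⁻¹ =
    LinearMap.trace ℂ _ ((Representation.linHom ρ σ q) * ∑ n : N, Representation.linHom ρ σ n) := by
  rw [Finset.mul_sum, map_sum]
  refine Finset.sum_congr rfl fun n _ => ?_
  rw [← map_mul, mul_comm, ← Representation.char_linHom]
  rfl

lemma linHom_comm [Fintype N] (A : V →ₗ[ℂ] W) (m : N) :
    ((∑ n : N, Representation.linHom ρ σ n) A) ∘ₗ resRep N ρ m =
      resRep N σ m ∘ₗ ((∑ n : N, Representation.linHom ρ σ n) A) := by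
  ext v
  simp only [LinearMap.sum_apply, LinearMap.comp_apply, Representation.linHom_apply, map_sum,
    resRep_apply]
  refine Fintype.sum_equiv (Equiv.mulLeft m⁻¹) _ _ fun n => ?_
  simp only [Equiv.coe_mulLeft, Subgroup.coe_mul, Subgroup.coe_inv, mul_inv_rev, inv_inv, map_mul,
    Module.End.mul_apply]
  rw [← Module.End.mul_apply (σ m), ← map_mul]
  simp

lemma sum_zero [Fintype N] (h : NormOne (resRep N ρ)) (h' : NormOne (resRep N σ))
    (e : (resRep N ρ).character ≠ (resRep N σ).character) :
    ∑ n : N, σ.character (q * n) * ρ.character (q * n)⁻¹ = 0 := by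
  have : ∑ n : N, Representation.linHom ρ σ n = 0 := by
    ext1 A
    exact h.hom_zero h' e _ (linHom_comm A)
  rw [sum_linHom, this, mul_zero, map_zero]

lemma sum_one [Fintype N] (h : NormOne (resRep N ρ)) :
    ∑ n : N, ρ.character (q * n) * ρ.character (q * n)⁻¹ = Nat.card N := by
  have : Representation.linHom ρ ρ q * ∑ n : N, Representation.linHom ρ ρ n =
      Representation.linHom ρ ρ 1 * ∑ n : N, Representation.linHom ρ ρ n := by
    ext1 A
    obtain ⟨c, hc⟩ := h.schur _ (linHom_comm A)
    rw [Module.End.mul_apply, Module.End.mul_apply, hc]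
    ext v
    simp [Representation.linHom_apply]
  rw [sum_linHom, this, ← sum_linHom, ← h]
  simp only [one_mul]
  rfl

lemma sum_coset [Fintype N] (f : G → ℂ) (hf : ∀ g, g ∉ coset N q → f g = 0) :
    ∑ g, f g = ∑ n : N, f (q * n) := by
  symm
  refine Fintype.sum_of_injective (fun n : N => q * n) (fun a b h => by simpa using h) _ _ ?_ ?_
  · intro g hg
    refine hf g fun h => hg ?_
    obtain ⟨n, rfl⟩ := mem_coset_iff.1 h
    exact ⟨n, rfl⟩
  · intro n; rfl

lemma coset_conj {g : G} (h : G) (hgen : ∀ x : G ⧸ N, x ∈ Subgroup.zpowers ((q : G ⧸ N))) :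
    h * g * h⁻¹ ∈ coset N q ↔ g ∈ coset N q := by
  have comm : ∀ x y : G ⧸ N, x * y = y * x := by
    intro x y
    obtain ⟨a, rfl⟩ := Subgroup.mem_zpowers_iff.1 (hgen x)
    obtain ⟨b, rfl⟩ := Subgroup.mem_zpowers_iff.1 (hgen y)
    rw [← zpow_add, ← zpow_add, add_comm]
  simp only [coset, Set.mem_ofPred_eq, QuotientGroup.mk_mul, QuotientGroup.mk_inv]
  rw [comm (h : G ⧸ N), mul_inv_cancel_right]

lemma mk_mem_Cset {g : G} (hgen : ∀ x : G ⧸ N, x ∈ Subgroup.zpowers ((q : G ⧸ N))) :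
    ConjClasses.mk g ∈ Cset N q ↔ g ∈ coset N q := by
  constructor
  · intro h
    exact h (ConjClasses.mem_carrier_mk)
  · intro h x hx
    rw [ConjClasses.mem_carrier_iff_mk_eq, ConjClasses.mk_eq_mk_iff_isConj, isConj_comm,
      isConj_iff] at hx
    obtain ⟨c, rfl⟩ := hx
    exact (coset_conj c hgen).2 h

lemma finrank_cosetClassFun (hgen : ∀ x : G ⧸ N, x ∈ Subgroup.zpowers ((q : G ⧸ N))) :
    Module.finrank ℂ (cosetClassFun N q) = (Cset N q).ncard := by
  classical
  have hfin : Finite (ConjClasses G) := inferInstance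
  have : Fintype (Cset N q) := Fintype.ofFinite _
  let e : cosetClassFun N q ≃ₗ[ℂ] (Cset N q → ℂ) :=
    { toFun := fun f c => f.1 (Quotient.out c.1)
      map_add' := fun _ _ => rfl
      map_smul' := fun _ _ => rfl
      invFun := fun b => ⟨fun g => if h : g ∈ coset N q then
          b ⟨ConjClasses.mk g, (mk_mem_Cset hgen).2 h⟩ else 0, by
        refine ⟨fun g h => ?_, fun g hg => dif_neg hg⟩
        have : ConjClasses.mk (h * g * h⁻¹) = ConjClasses.mk g := by
          rw [ConjClasses.mk_eq_mk_iff_isConj, isConj_comm, isConj_iff]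
          exact ⟨h, rfl⟩
        simp only [coset_conj h hgen, this]⟩
      left_inv := by
        intro f
        ext g
        by_cases hg : g ∈ coset N q
        · simp only [hg, dif_pos]
          have : ConjClasses.mk (Quotient.out (ConjClasses.mk g)) = ConjClasses.mk g :=
            Quotient.out_eq _
          rw [ConjClasses.mk_eq_mk_iff_isConj, isConj_comm, isConj_iff] at this
          obtain ⟨c, hc⟩ := this
          rw [← hc]
          exact f.2.1 g c
        · simp only [hg, dif_neg, not_false_eq_true]
          exact (f.2.2 g hg).symm
      right_inv := by
        intro b
        ext c
        have : ConjClasses.mk (Quotient.out c.1) = c.1 := Quotient.out_eq _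
        have h : Quotient.out c.1 ∈ coset N q := (mk_mem_Cset hgen).1 (by rw [this]; exact c.2)
        simp only [h, dif_pos, this] }
  rw [e.finrank_eq, Module.finrank_fintype_fun_eq_card, Set.ncard_eq_toFinset_card',
    Set.toFinset_card]

end second

/-- If `G ⧸ N` is cyclic generated by `qN`, the number of conjugacy
classes of `G` in `qN` equals the number of irreducible characters of `N` that extend to
a (irreducible) character of `G`. -/
theorem conjClasses_coset_card_eq_extendable_card
    (G : Type) [Group G] [Fintype G] (N : Subgroup G) [N.Normal] (q : G)
    (hgen : ∀ x : G ⧸ N, x ∈ Subgroup.zpowers ((q : G ⧸ N))) :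
    (Cset N q).ncard =
      {τ : ↥N → ℂ | IsIrrChar ↥N τ ∧
        ∃ ρ : G → ℂ, IsIrrChar G ρ ∧ (fun n : ↥N => ρ ↑n) = τ}.ncard := by
  classical
  have : Fintype N := Fintype.ofFinite _
  set T := {τ : ↥N → ℂ | IsIrrChar ↥N τ ∧
        ∃ ρ : G → ℂ, IsIrrChar G ρ ∧ (fun n : ↥N => ρ ↑n) = τ} with hT
  have ex : ∀ τ : T, ∃ U : FDRep ℂ G, NormOne (resRep N U.ρ) ∧ (resRep N U.ρ).character = τ.1 := by
    rintro ⟨τ, ⟨X, hX, hXτ⟩, _, ⟨U, hU, rfl⟩, hUτ⟩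
    have e : (resRep N U.ρ).character = τ := hUτ
    refine ⟨U, ?_, e⟩
    have := normOne_of_simple X hX
    unfold NormOne at this ⊢
    rw [e, hXτ]
    exact this
  choose U hU1 hUτ using ex
  let v : T → cosetClassFun N q := fun τ =>
    ⟨fun g => if g ∈ coset N q then Representation.character (U τ).ρ g else 0,
      fun g h => by simp only [coset_conj h hgen, Representation.char_conj],
      fun g hg => if_neg hg⟩
  let Ψ : cosetClassFun N q →ₗ[ℂ] (T → ℂ) :=
    { toFun := fun f τ => ∑ g, f.1 g * Representation.character (U τ).ρ g⁻¹
      map_add' := fun f f' => by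
        ext τ
        simp [add_mul, Finset.sum_add_distrib]
      map_smul' := fun c f => by
        ext τ
        simp [mul_assoc, Finset.mul_sum] }
  have hΨv : ∀ σ τ, Ψ (v σ) τ = if σ = τ then (Nat.card N : ℂ) else 0 := by
    intro σ τ
    change ∑ g, (if g ∈ coset N q then Representation.character (U σ).ρ g else 0) * Representation.character (U τ).ρ g⁻¹ = _
    rw [sum_coset (N := N) (q := q) _ (fun g hg => by rw [if_neg hg, zero_mul])]
    have : ∀ n : N, q * n ∈ coset N q := fun n => mem_coset_iff.2 ⟨n, rfl⟩
    simp only [this, if_true]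
    split_ifs with h
    · subst h
      exact sum_one (hU1 σ)
    · exact sum_zero (hU1 τ) (hU1 σ) (by
        rw [hUτ, hUτ]
        exact fun e => h (Subtype.ext e.symm))
  have hli : LinearIndependent ℂ v := by
    rw [linearIndependent_iff']
    intro s a ha τ hτ
    have := congrFun (congrArg Ψ ha) τ
    simp only [map_sum, map_smul, Finset.sum_apply, Pi.smul_apply, hΨv, smul_eq_mul, mul_ite,
      mul_zero, Finset.sum_ite_eq', hτ, if_true, map_zero, Pi.zero_apply] at this
    exact (mul_eq_zero.1 this).resolve_right card_ne
  have hTfin : Finite T := hli.finite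
  have : Fintype T := Fintype.ofFinite _
  have hinj : Function.Injective Ψ := by
    rw [injective_iff_map_eq_zero]
    intro f hf
    have hf' : ∀ τ, ∑ g, f.1 g * Representation.character (U τ).ρ g⁻¹ = 0 := fun τ => congrFun hf τ
    ext1
    refine complete f.1 f.2.1 ?_
    intro V _ _ _ ρ hρ
    by_cases hz : ∀ g ∈ coset N q, ρ.character g⁻¹ = 0
    · refine Finset.sum_eq_zero fun g _ => ?_
      by_cases hg : g ∈ coset N q
      · rw [hz g hg, mul_zero]
      · rw [f.2.2 g hg, zero_mul]
    · push Not at hz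
      obtain ⟨g, hg, hne⟩ := hz
      have h1 := normOne_res hgen hρ g hg hne
      let τ : T := ⟨(resRep N ρ).character, ⟨FDRep.of (resRep N ρ), h1.simple, rfl⟩,
        ρ.character, ⟨FDRep.of ρ, hρ.simple, rfl⟩, rfl⟩
      obtain ⟨c, hc⟩ := char_scalar (q := q) h1 (hU1 τ) (hUτ τ).symm
      calc ∑ g, f.1 g * ρ.character g⁻¹ = ∑ g, c * (f.1 g * Representation.character (U τ).ρ g⁻¹) := by
            refine Finset.sum_congr rfl fun g _ => ?_
            by_cases hg : g ∈ coset N q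
            · rw [hc g hg]; ring
            · rw [f.2.2 g hg]; ring
        _ = 0 := by rw [← Finset.mul_sum, hf', mul_zero]
  rw [← finrank_cosetClassFun hgen, Set.ncard_eq_toFinset_card', Set.toFinset_card]
  apply le_antisymm
  · have := LinearMap.finrank_le_finrank_of_injective hinj
    rwa [Module.finrank_fintype_fun_eq_card] at this
  · exact hli.fintype_card_le_finrank
end

section
/- Let G be a finite group and N a normal subgroup with G/N cyclic. Then N has a non-trivial irreducible complex character that extends to a character of G if and only if G has no conjugacy class of size #N. -/
open scoped BigOperators

variable {G : Type} [Group G]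

open CategoryTheory

def Sch {G V : Type} [Group G] [AddCommGroup V] [Module ℂ V] (ρ : Representation ℂ G V) : Prop :=
  Nontrivial V ∧ ∀ T : V →ₗ[ℂ] V, (∀ g, T ∘ₗ ρ g = ρ g ∘ₗ T) → ∃ c : ℂ, T = c • LinearMap.id

theorem simple_iff_sch {G : Type} [Group G] [Finite G] (V : FDRep ℂ G) :
    Simple V ↔ Sch V.ρ := by
  rw [FDRep.simple_iff_end_is_rank_one]
  let F : (V ⟶ V) → (V →ₗ[ℂ] V) := fun f => f.hom.hom.hom
  have F0 : ∀ f, F f = 0 → f = 0 := fun f h => by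
    apply Action.Hom.ext
    apply InducedCategory.hom_ext
    apply ModuleCat.hom_ext
    exact h
  have Fsub : ∀ f g, F (f - g) = F f - F g := fun f g => rfl
  have Fsmul : ∀ (c : ℂ) f, F (c • f) = c • F f := fun f g => rfl
  have Fid : F (𝟙 V) = LinearMap.id := rfl
  have Fcomm : ∀ f g, F f ∘ₗ V.ρ g = V.ρ g ∘ₗ F f := fun f g => by
    have := f.comm g
    have := congrArg (fun z => z.hom.hom) this
    exact this
  have Fsurj : ∀ T : V →ₗ[ℂ] V, (∀ g, T ∘ₗ V.ρ g = V.ρ g ∘ₗ T) → ∃ f, F f = T := by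
    intro T hT
    refine ⟨⟨InducedCategory.homMk (ModuleCat.ofHom T), fun g => ?_⟩, rfl⟩
    apply InducedCategory.hom_ext
    apply ModuleCat.hom_ext
    exact hT g
  have Finj : ∀ f g, F f = F g → f = g := fun f g h => by
    rw [← sub_eq_zero]; apply F0; rw [Fsub, h, sub_self]
  constructor
  · intro h
    have hnt : Nontrivial V := by
      by_contra hn
      rw [not_nontrivial_iff_subsingleton] at hn
      have : Subsingleton (V ⟶ V) := ⟨fun f g => Finj _ _ (LinearMap.ext fun x => Subsingleton.elim _ _)⟩
      rw [Module.finrank_zero_of_subsingleton] at h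
      omega
    refine ⟨hnt, fun T hT => ?_⟩
    obtain ⟨f, hf⟩ := Fsurj T hT
    have h1 : (𝟙 V : V ⟶ V) ≠ 0 := by
      intro h0
      have : F (𝟙 V) = F 0 := by rw [h0]
      rw [Fid] at this
      obtain ⟨x, hx⟩ := exists_ne (0 : V)
      exact hx (LinearMap.congr_fun this x)
    obtain ⟨c, hc⟩ := (finrank_eq_one_iff_of_nonzero' _ h1).1 h f
    exact ⟨c, by rw [← hf, ← hc, Fsmul, Fid]⟩
  · rintro ⟨hnt, h⟩
    have h1 : (𝟙 V : V ⟶ V) ≠ 0 := by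
      intro h0
      have : F (𝟙 V) = F 0 := by rw [h0]
      rw [Fid] at this
      obtain ⟨x, hx⟩ := exists_ne (0 : V)
      exact hx (LinearMap.congr_fun this x)
    rw [finrank_eq_one_iff_of_nonzero' _ h1]
    intro f
    obtain ⟨c, hc⟩ := h (F f) (Fcomm f)
    exact ⟨c, Finj _ _ (by rw [Fsmul, Fid, hc])⟩

theorem sch_of_irr {G V : Type} [Group G] [AddCommGroup V] [Module ℂ V] [FiniteDimensional ℂ V]
    (ρ : Representation ℂ G V) (h : ρ.IsIrreducible) : Sch ρ := by
  constructor
  · by_contra hn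
    rw [not_nontrivial_iff_subsingleton] at hn
    have := h.toNontrivial
    obtain ⟨a, b, hab⟩ := this
    apply hab
    apply Subrepresentation.toSubmodule_injective
    exact Subsingleton.elim _ _
  · intro T hT
    obtain ⟨c, hc⟩ := (Representation.IsIrreducible.algebraMap_intertwiningMap_bijective_of_isAlgClosed (ρ := ρ)).2 ⟨T, hT⟩
    refine ⟨c, ?_⟩
    have := congrArg Representation.IntertwiningMap.toLinearMap hc
    exact this.symm

theorem kill {G : Type} [Group G] [Fintype G] (a b : G)
    (hcon : ∀ (V : Type) [AddCommGroup V] [Module ℂ V] [FiniteDimensional ℂ V]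
      (ρ : Representation ℂ G V), ρ.IsIrreducible →
      LinearMap.trace ℂ V (ρ a) = LinearMap.trace ℂ V (ρ b))
    (M : Type) [AddCommGroup M] [Module (MonoidAlgebra ℂ G) M]
    [Module ℂ M] [IsScalarTower ℂ (MonoidAlgebra ℂ G) M]
    [IsSimpleModule (MonoidAlgebra ℂ G) M] (x : M) :
    (∑ h : G, (MonoidAlgebra.of ℂ G (h * a * h⁻¹) - MonoidAlgebra.of ℂ G (h * b * h⁻¹))) • x = 0 := by
  set z : MonoidAlgebra ℂ G := ∑ h : G, (MonoidAlgebra.of ℂ G (h * a * h⁻¹) - MonoidAlgebra.of ℂ G (h * b * h⁻¹)) with hz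
  have hfin : Module.Finite ℂ M := Module.Finite.trans (MonoidAlgebra ℂ G) _
  set ρ : Representation ℂ G M := Representation.ofModule' M with hρ
  have hact : ∀ (r : MonoidAlgebra ℂ G) (x : M), ρ.asAlgebraHom r x = r • x := by
    intro r x
    have : ρ.asAlgebraHom = Algebra.lsmul ℂ ℂ M := by
      rw [hρ]; exact Equiv.apply_symm_apply _ _
    rw [this]; rfl
  have hs : ρ.IsIrreducible := by
    rw [Representation.irreducible_iff_isSimpleModule_asModule]
    let e : ρ.asModule ≃ₗ[MonoidAlgebra ℂ G] M :=
      { ρ.asModuleEquiv.toAddEquiv with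
        map_smul' := fun r x => (ρ.asModuleEquiv_map_smul r x).trans (hact r _) }
    exact IsSimpleModule.congr e
  obtain ⟨hnt, hsch⟩ := sch_of_irr ρ hs
  have hT : ρ.asAlgebraHom z = ∑ h : G, (ρ h * ρ a * ρ h⁻¹ - ρ h * ρ b * ρ h⁻¹) := by
    simp [z, map_sum]
  obtain ⟨c, hc⟩ := hsch (ρ.asAlgebraHom z) (fun g => by
    change ρ.asAlgebraHom z * ρ g = ρ g * ρ.asAlgebraHom z
    rw [hT, Finset.sum_mul, Finset.mul_sum]
    refine Fintype.sum_equiv (Equiv.mulLeft g⁻¹) _ _ fun h => ?_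
    simp only [Equiv.coe_mulLeft, ← map_mul, sub_mul, mul_sub]
    simp [mul_assoc])
  have htr := congrArg (LinearMap.trace ℂ _) hc
  have hab' := hcon _ ρ hs
  have hconj : ∀ (h x : G), LinearMap.trace ℂ _ (ρ h * ρ x * ρ h⁻¹) = LinearMap.trace ℂ _ (ρ x) := by
    intro h x
    rw [LinearMap.trace_mul_comm, ← mul_assoc, ← map_mul]; simp
  rw [hT, map_sum, map_smul, LinearMap.trace_id] at htr
  simp only [map_sub, hconj, hab', sub_self, Finset.sum_const_zero, smul_eq_mul] at htr
  have hd : (Module.finrank ℂ M : ℂ) ≠ 0 := by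
    exact_mod_cast Module.finrank_pos.ne'
  have hc0 : c = 0 := by
    rcases mul_eq_zero.1 htr.symm with h | h
    · exact h
    · exact absurd h hd
  rw [hc0, zero_smul] at hc
  have h1 := LinearMap.congr_fun hc x
  rw [hact] at h1
  exact h1

theorem sep {G : Type} [Group G] [Fintype G] (a b : G) (hab : ¬ IsConj a b) :
    ∃ (V : Type) (_ : AddCommGroup V) (_ : Module ℂ V) (_ : FiniteDimensional ℂ V)
      (ρ : Representation ℂ G V), ρ.IsIrreducible ∧
      LinearMap.trace ℂ V (ρ a) ≠ LinearMap.trace ℂ V (ρ b) := by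
  classical
  by_contra hcon
  push Not at hcon
  let z : MonoidAlgebra ℂ G := ∑ h : G, (MonoidAlgebra.of ℂ G (h * a * h⁻¹) - MonoidAlgebra.of ℂ G (h * b * h⁻¹))
  have hz : ∀ m : Ideal (MonoidAlgebra ℂ G), IsCoatom m → z ∈ m := by
    intro m hm
    have hs : IsSimpleModule (MonoidAlgebra ℂ G) (MonoidAlgebra ℂ G ⧸ m) :=
      isSimpleModule_iff_isCoatom.2 hm
    have h1 := kill a b (fun V _ _ _ ρ => hcon V _ _ ‹_› ρ) (MonoidAlgebra ℂ G ⧸ m) (Submodule.Quotient.mk 1)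
    rw [← Submodule.Quotient.mk_smul, Submodule.Quotient.mk_eq_zero, smul_eq_mul, mul_one] at h1
    exact h1
  have hj : Module.jacobson (MonoidAlgebra ℂ G) (MonoidAlgebra ℂ G) = ⊥ := by
    have : NeZero (Nat.card G : ℂ) := ⟨by exact_mod_cast Nat.card_pos.ne'⟩
    exact IsSemisimpleModule.jacobson_eq_bot _ _
  have hz0 : z = 0 := by
    have : z ∈ Module.jacobson (MonoidAlgebra ℂ G) (MonoidAlgebra ℂ G) := by
      rw [Module.jacobson, Submodule.mem_sInf]
      exact hz
    rw [hj] at this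
    simpa using this
  have hf : ∀ h : G, (MonoidAlgebra.of ℂ G (h * a * h⁻¹) - MonoidAlgebra.of ℂ G (h * b * h⁻¹)).coeff a
      = if h * a * h⁻¹ = a then 1 else 0 := by
    intro h
    have : h * b * h⁻¹ ≠ a := fun he => hab (isConj_iff.2 ⟨h, he⟩).symm
    simp [MonoidAlgebra.of_apply, Finsupp.single_apply, this]
  have := congrArg (fun w : MonoidAlgebra ℂ G => w.coeff a) hz0
  simp only [z, MonoidAlgebra.coeff_sum, Finsupp.finsetSum_apply, hf] at this
  rw [Finset.sum_boole] at this
  simp only [MonoidAlgebra.coeff_zero, Finsupp.coe_zero, Pi.zero_apply, Nat.cast_eq_zero, Finset.card_eq_zero] at this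
  have h1 : (1 : G) ∈ (Finset.univ.filter fun h : G => h * a * h⁻¹ = a) := by simp
  rw [this] at h1
  simp at h1

theorem cyc_sch {G V : Type} [Group G] [Fintype G] [AddCommGroup V] [Module ℂ V] [FiniteDimensional ℂ V]
    (N : Subgroup G) [N.Normal] (q : G) (hq : ∀ g : G, ∃ k : ℕ, ∃ n ∈ N, g = q ^ k * n)
    (ρ : Representation ℂ G V) (hρ : ρ.IsIrreducible) (htr : LinearMap.trace ℂ V (ρ q) ≠ 0) :
    Sch (ρ.comp N.subtype) := by
  obtain ⟨hnt, hsch⟩ := sch_of_irr ρ hρ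
  refine ⟨hnt, fun T hT => ?_⟩
  have hT : ∀ n ∈ N, T * ρ n = ρ n * T := fun n hn => hT ⟨n, hn⟩
  set m := Fintype.card G with hm
  have hm0 : m ≠ 0 := Fintype.card_ne_zero
  have hqm : q ^ m = 1 := pow_card_eq_one
  let c : ℕ → (V →ₗ[ℂ] V) := fun k => ρ (q ^ k) * T * ρ (q ^ k)⁻¹
  let P : ℂ → (V →ₗ[ℂ] V) := fun l => ∑ k ∈ Finset.range m, l ^ k • c k
  have hcN : ∀ k, ∀ n ∈ N, c k * ρ n = ρ n * c k := by
    intro k n hn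
    have h := hT ((q ^ k)⁻¹ * n * q ^ k) (by simpa using Subgroup.Normal.conj_mem ‹N.Normal› n hn (q ^ k)⁻¹)
    simp only [c]
    have h1 : ρ (q^k)⁻¹ * ρ n = ρ ((q ^ k)⁻¹ * n * q ^ k) * ρ (q^k)⁻¹ := by
      rw [← map_mul, ← map_mul]; simp [mul_assoc]
    have h2 : ρ (q^k) * ρ ((q ^ k)⁻¹ * n * q ^ k) = ρ n * ρ (q^k) := by
      rw [← map_mul, ← map_mul]; simp [mul_assoc]
    rw [mul_assoc, h1, ← mul_assoc, mul_assoc (ρ (q^k)), h, ← mul_assoc, h2]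
    simp only [mul_assoc]
  have hPN : ∀ l, ∀ n ∈ N, P l * ρ n = ρ n * P l := by
    intro l n hn
    simp only [P, Finset.sum_mul, Finset.mul_sum, smul_mul_assoc, mul_smul_comm, hcN _ n hn]
  have hcq : ∀ k, ρ q * c k = c (k + 1) * ρ q := by
    intro k
    simp only [c]
    have h1 : ρ (q^(k+1))⁻¹ * ρ q = ρ (q^k)⁻¹ := by
      rw [← map_mul, pow_succ']; simp
    rw [mul_assoc _ _ (ρ q), h1, pow_succ', map_mul]
    simp only [mul_assoc]
  have hcm : c m = c 0 := by simp only [c]; rw [hqm, pow_zero]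
  have hPq : ∀ l : ℂ, l ^ m = 1 → l • (ρ q * P l) = P l * ρ q := by
    intro l hl
    simp only [P, Finset.sum_mul, Finset.mul_sum, smul_mul_assoc, mul_smul_comm, hcq, Finset.smul_sum, smul_smul, ← pow_succ']
    have h := Finset.sum_range_succ (fun k => l ^ k • (c k * ρ q)) m
    rw [Finset.sum_range_succ', hcm, hl] at h
    simpa using h
  have hP0 : ∀ l : ℂ, l ^ m = 1 → l ≠ 1 → P l = 0 := by
    intro l hl hl1
    have hl0 : l ≠ 0 := by rintro rfl; simp [hm0] at hl
    let K : Subrepresentation ρ := ⟨LinearMap.ker (P l), by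
      intro g v hv
      rw [LinearMap.mem_ker] at hv ⊢
      have hqv : ∀ (k : ℕ) v, P l v = 0 → P l (ρ (q ^ k) v) = 0 := by
        intro k
        induction k with
        | zero => intro v hv; simpa using hv
        | succ k ih =>
          intro v hv
          rw [pow_succ, map_mul, Module.End.mul_apply]
          apply ih
          have := LinearMap.congr_fun (hPq l hl) v
          simp only [LinearMap.smul_apply, Module.End.mul_apply, hv, map_zero, smul_zero] at this
          exact this.symm
      obtain ⟨k, n, hn, rfl⟩ := hq g
      rw [map_mul, Module.End.mul_apply]
      apply hqv
      have := LinearMap.congr_fun (hPN l n hn) v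
      simpa [hv] using this⟩
    rcases hρ.eq_bot_or_eq_top K with h | h
    · exfalso
      have hk : LinearMap.ker (P l) = ⊥ := congrArg Subrepresentation.toSubmodule h
      have hu : IsUnit (P l) := (LinearMap.isUnit_iff_ker_eq_bot _).2 hk
      obtain ⟨u, hu⟩ := hu
      have h2 : l • ρ q = (u : V →ₗ[ℂ] V) * ρ q * ((u⁻¹ : (V →ₗ[ℂ] V)ˣ) : V →ₗ[ℂ] V) := by
        rw [hu, ← hPq l hl, ← hu]; simp [mul_assoc]
      have h3 := congrArg (LinearMap.trace ℂ V) h2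
      rw [LinearMap.trace_mul_comm, ← mul_assoc] at h3
      simp only [Units.inv_mul, one_mul, map_smul, smul_eq_mul] at h3
      exact hl1 (mul_right_cancel₀ htr (by rw [h3, one_mul]))
    · have hk : LinearMap.ker (P l) = ⊤ := congrArg Subrepresentation.toSubmodule h
      exact LinearMap.ker_eq_top.1 hk
  obtain ⟨ζ, hζ⟩ : ∃ ζ : ℂ, IsPrimitiveRoot ζ m := ⟨_, Complex.isPrimitiveRoot_exp m hm0⟩
  have hsum : ∑ j ∈ Finset.range m, P (ζ ^ j) = (m : ℂ) • T := by
    simp only [P]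
    rw [Finset.sum_comm]
    simp only [← Finset.sum_smul]
    rw [Finset.sum_eq_single 0]
    · simp [c]
    · intro k hk hk0
      have h1 : (∑ j ∈ Finset.range m, (ζ ^ j) ^ k) = 0 := by
        have hne : ζ ^ k ≠ 1 := hζ.pow_ne_one_of_pos_of_lt hk0 (Finset.mem_range.1 hk)
        have hg := mul_neg_geom_sum (ζ ^ k) m
        rw [← pow_mul, mul_comm k m, pow_mul, hζ.pow_eq_one, one_pow, sub_self] at hg
        rcases mul_eq_zero.1 hg with h | h
        · exact absurd (sub_eq_zero.1 h).symm hne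
        · rw [← h]; exact Finset.sum_congr rfl fun j _ => by rw [← pow_mul, ← pow_mul, mul_comm]
      rw [h1, zero_smul]
    · intro h; exact absurd (Finset.mem_range.2 (Nat.pos_of_ne_zero hm0)) h
  rw [Finset.sum_eq_single 0 (fun j hj hj0 => hP0 _ (by rw [← pow_mul, mul_comm, pow_mul, hζ.pow_eq_one, one_pow]) (hζ.pow_ne_one_of_pos_of_lt hj0 (Finset.mem_range.1 hj)))
    (fun h => absurd (Finset.mem_range.2 (Nat.pos_of_ne_zero hm0)) h), pow_zero] at hsum
  have hTq : ρ q * T = T * ρ q := by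
    have h := hPq 1 (one_pow _)
    rw [hsum, one_smul, mul_smul_comm, smul_mul_assoc] at h
    exact smul_right_injective _ (by exact_mod_cast hm0 : (m : ℂ) ≠ 0) h
  refine hsch T fun g => ?_
  obtain ⟨k, n, hn, rfl⟩ := hq g
  change T * _ = _ * T
  have : ρ q ^ k * T = T * ρ q ^ k := (Commute.pow_left hTq k : _)
  rw [map_mul, map_pow, ← mul_assoc, ← this, mul_assoc, hT n hn, mul_assoc]

/-- Nonvanishing on cosets. -/
theorem coset_ne {G V : Type} [Group G] [Fintype G] [AddCommGroup V] [Module ℂ V] [FiniteDimensional ℂ V]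
    (N : Subgroup G) (ρ : Representation ℂ G V) (h : Sch (ρ.comp N.subtype)) (q : G)
    (h0 : ∀ n ∈ N, LinearMap.trace ℂ V (ρ (q * n)) = 0) : False := by
  classical
  obtain ⟨hnt, hsch⟩ := h
  have : Fintype N := Fintype.ofFinite _
  have key : ∀ T : V →ₗ[ℂ] V, ∃ c : ℂ, ∑ n : N, ρ (n : G)⁻¹ * T * ρ (n : G) = c • LinearMap.id ∧
      c * Module.finrank ℂ V = Fintype.card N * LinearMap.trace ℂ V T := by
    intro T
    obtain ⟨c, hc⟩ := hsch (∑ n : N, ρ (n : G)⁻¹ * T * ρ (n : G)) (fun g => by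
      change _ * ρ (g : G) = ρ (g : G) * _
      rw [Finset.sum_mul, Finset.mul_sum]
      refine Fintype.sum_equiv (Equiv.mulRight g) _ _ fun h => ?_
      simp only [Equiv.coe_mulRight, Subgroup.coe_mul, mul_inv_rev, map_mul]
      have : ρ (g : G) * ρ (g : G)⁻¹ = 1 := by rw [← map_mul]; simp
      simp only [← mul_assoc, this, one_mul])
    refine ⟨c, hc, ?_⟩
    have htr := congrArg (LinearMap.trace ℂ _) hc
    rw [map_sum, map_smul, LinearMap.trace_id, smul_eq_mul] at htr
    rw [← htr]
    have : ∀ n : N, LinearMap.trace ℂ V (ρ (n : G)⁻¹ * T * ρ (n : G)) = LinearMap.trace ℂ V T := by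
      intro n
      rw [LinearMap.trace_mul_comm, ← mul_assoc, ← map_mul]; simp
    simp [this]
  let b := Module.finBasis ℂ V
  obtain ⟨v, hv⟩ := exists_ne (0 : V)
  -- rank one operators
  have key2 : ∀ i, ∑ n : N, (b.coord i (ρ q (ρ (n : G) (b i)))) • ρ (n : G)⁻¹ v
      = ((Fintype.card N : ℂ) / Module.finrank ℂ V * b.coord i (ρ q v)) • b i := by
    intro i
    obtain ⟨c, hc, hc'⟩ := key (LinearMap.smulRight (b.coord i ∘ₗ ρ q) v)
    have hd : (Module.finrank ℂ V : ℂ) ≠ 0 := by exact_mod_cast Module.finrank_pos.ne'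
    have htr : LinearMap.trace ℂ V (LinearMap.smulRight (b.coord i ∘ₗ ρ q) v) = b.coord i (ρ q v) := by
      simp [LinearMap.trace_smulRight]
    rw [htr] at hc'
    have : c = (Fintype.card N : ℂ) / Module.finrank ℂ V * b.coord i (ρ q v) := by
      field_simp; exact hc'
    rw [← this]
    have h := LinearMap.congr_fun hc (b i)
    simpa [LinearMap.sum_apply] using h
  have hsum : ∑ i, ∑ n : N, (b.coord i (ρ q (ρ (n : G) (b i)))) • ρ (n : G)⁻¹ v = 0 := by
    rw [Finset.sum_comm]
    refine Finset.sum_eq_zero fun n _ => ?_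
    rw [← Finset.sum_smul]
    have := h0 n n.2
    rw [LinearMap.trace_eq_matrix_trace ℂ b, Matrix.trace] at this
    simp only [Matrix.diag, LinearMap.toMatrix_apply, map_mul, Module.End.mul_apply] at this
    simp only [Module.Basis.coord_apply]
    rw [this, zero_smul]
  simp only [key2, mul_smul, ← Finset.smul_sum] at hsum
  have hb := b.sum_repr (ρ q v)
  simp only [Module.Basis.coord_apply] at hsum
  rw [hb] at hsum
  have hd : (Module.finrank ℂ V : ℂ) ≠ 0 := by exact_mod_cast Module.finrank_pos.ne'
  have hN : (Fintype.card N : ℂ) ≠ 0 := by exact_mod_cast Fintype.card_ne_zero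
  rcases smul_eq_zero.1 hsum with h | h
  · exact (div_ne_zero hN hd) h
  · apply hv
    have : ρ q⁻¹ (ρ q v) = v := by simp
    rw [← this, h, map_zero]

theorem sum_zero_s15 {N V : Type} [Group N] [Fintype N] [AddCommGroup V] [Module ℂ V] [FiniteDimensional ℂ V]
    (ρ : Representation ℂ N V) (h : Sch ρ) (hne : ¬ ∀ n, LinearMap.trace ℂ V (ρ n) = 1) :
    ∑ n, ρ n = 0 := by
  obtain ⟨hnt, hsch⟩ := h
  have hL : ∀ g, ρ g * ∑ n, ρ n = ∑ n, ρ n := fun g => by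
    rw [Finset.mul_sum]
    exact Fintype.sum_equiv (Equiv.mulLeft g) _ _ fun h => by simp
  have hR : ∀ g, (∑ n, ρ n) * ρ g = ∑ n, ρ n := fun g => by
    rw [Finset.sum_mul]
    exact Fintype.sum_equiv (Equiv.mulRight g) _ _ fun h => by simp
  obtain ⟨c, hc⟩ := hsch (∑ n, ρ n) (fun g => (hR g).trans (hL g).symm)
  by_cases hc0 : c = 0
  · rw [hc, hc0, zero_smul]
  exfalso
  have h1 : ∀ g, ρ g = 1 := by
    intro g
    have := hL g
    rw [hc, mul_smul_comm] at this
    have := smul_right_injective _ hc0 this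
    exact this
  have hd : Module.finrank ℂ V = 1 := by
    obtain ⟨v, hv⟩ := exists_ne (0 : V)
    rw [finrank_eq_one_iff_of_nonzero' v hv]
    intro w
    obtain ⟨f, hf⟩ := Module.Projective.exists_dual_eq_one ℂ hv
    obtain ⟨c, hc⟩ := hsch (f.smulRight w) (fun g => by rw [h1]; rfl)
    have := LinearMap.congr_fun hc v
    simp [hf] at this
    exact ⟨c, this.symm⟩
  apply hne
  intro n
  rw [h1]
  simp [hd]

theorem coset_ncard {G : Type} [Group G] (N : Subgroup G) (a : G) :
    Set.ncard {g : G | a⁻¹ * g ∈ N} = Nat.card N := by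
  have : {g : G | a⁻¹ * g ∈ N} = (fun x => a * x) '' (N : Set G) := by
    ext g
    constructor
    · intro h; exact ⟨a⁻¹ * g, h, by simp⟩
    · rintro ⟨x, hx, rfl⟩; simpa using hx
  rw [this, Set.ncard_image_of_injective _ (mul_right_injective a)]
  rfl

theorem class_sub {G : Type} [Group G] (N : Subgroup G) [N.Normal] (hcyc : IsCyclic (G ⧸ N)) (a : G) :
    (ConjClasses.mk a).carrier ⊆ {g : G | a⁻¹ * g ∈ N} := by
  intro g hg
  rw [ConjClasses.mem_carrier_iff_mk_eq, ConjClasses.mk_eq_mk_iff_isConj, isConj_comm, isConj_iff] at hg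
  obtain ⟨h, rfl⟩ := hg
  rw [Set.mem_ofPred_eq, ← QuotientGroup.eq]
  have hc := IsCyclic.isMulCommutative (α := G ⧸ N)
  have : (h : G ⧸ N) * (a : G ⧸ N) = (a : G ⧸ N) * h := hc.is_comm.comm _ _
  simp [this]

/-- If `G ⧸ N` is cyclic, then `N` has a non-trivial irreducible
character extending to `G` iff `G` has no conjugacy class of size `#N`. -/
theorem nontrivial_extension_iff_no_class_of_size_N
    (G : Type) [Group G] [Fintype G] (N : Subgroup G) [N.Normal]
    (hcyc : IsCyclic (G ⧸ N)) :
    (∃ τ : ↥N → ℂ, IsIrrChar ↥N τ ∧ τ ≠ (fun _ => 1) ∧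
        ∃ ρ : G → ℂ, IsIrrChar G ρ ∧ (fun n : ↥N => ρ ↑n) = τ) ↔
      ¬ ∃ c : ConjClasses G, c.carrier.ncard = Nat.card ↥N := by
  classical
  have : Fintype N := Fintype.ofFinite _
  constructor
  · rintro ⟨τ, ⟨W, hW, hτ⟩, hne, ρ, ⟨V, hV, hρ⟩, hres⟩ ⟨c, hc⟩
    let Vr : FDRep ℂ N := FDRep.of (V.ρ.comp N.subtype)
    have hchar : Vr.character = W.character := by
      rw [← hτ, ← hres, hρ]; rfl
    have hVr : Simple Vr := by
      rw [FDRep.simple_iff_char_is_norm_one] at hW ⊢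
      rw [hchar]; exact hW
    have hsch : Sch (V.ρ.comp N.subtype) := (simple_iff_sch Vr).1 hVr
    obtain ⟨a, rfl⟩ := ConjClasses.mk_surjective c
    have hcar : (ConjClasses.mk a).carrier = {g : G | a⁻¹ * g ∈ N} :=
      Set.eq_of_subset_of_ncard_le (class_sub N hcyc a) (by rw [coset_ncard, hc]) (Set.toFinite _)
    have hconst : ∀ n ∈ N, LinearMap.trace ℂ V (V.ρ (a * n)) = LinearMap.trace ℂ V (V.ρ a) := by
      intro n hn
      have : a * n ∈ (ConjClasses.mk a).carrier := by rw [hcar]; simpa using hn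
      rw [ConjClasses.mem_carrier_iff_mk_eq, ConjClasses.mk_eq_mk_iff_isConj, isConj_comm, isConj_iff] at this
      obtain ⟨h, hh⟩ := this
      rw [← hh]
      exact V.char_conj a h
    have hs0 := sum_zero_s15 (V.ρ.comp N.subtype) hsch (fun h => hne (by
      rw [hτ, ← hchar]; funext n; exact h n))
    refine coset_ne N V.ρ hsch a fun n hn => ?_
    rw [hconst n hn]
    have h1 := congrArg (fun T => LinearMap.trace ℂ V (V.ρ a * T)) hs0
    simp only [Finset.mul_sum, map_sum, mul_zero, map_zero] at h1
    have h2 : ∀ n : N, LinearMap.trace ℂ V (V.ρ a * (V.ρ.comp N.subtype) n) = LinearMap.trace ℂ V (V.ρ a) := by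
      intro n
      rw [← hconst n n.2, map_mul V.ρ]; rfl
    simp only [h2, Finset.sum_const, Finset.card_univ, nsmul_eq_mul] at h1
    have hN : (Fintype.card N : ℂ) ≠ 0 := by exact_mod_cast Fintype.card_ne_zero
    exact (mul_eq_zero.1 h1).resolve_left hN
  · intro hno
    obtain ⟨x, hx⟩ := hcyc.exists_generator
    obtain ⟨q, rfl⟩ := QuotientGroup.mk_surjective x
    obtain ⟨b, hbN, hb⟩ : ∃ b, q⁻¹ * b ∈ N ∧ ¬ IsConj q b := by
      by_contra hcon
      push Not at hcon
      apply hno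
      refine ⟨ConjClasses.mk q, ?_⟩
      rw [← coset_ncard N q]
      congr 1
      refine Set.Subset.antisymm (class_sub N hcyc q) fun g hg => ?_
      rw [ConjClasses.mem_carrier_iff_mk_eq, ConjClasses.mk_eq_mk_iff_isConj]
      exact (hcon g hg).symm
    obtain ⟨V, _, _, _, ρ, hirr, htr⟩ := sep q b hb
    have hgen : ∀ g0 : G, (g0 : G ⧸ N) = q → ∀ g : G, ∃ k : ℕ, ∃ n ∈ N, g = g0 ^ k * n := by
      intro g0 h0 g
      have hg := hx (g : G ⧸ N)
      rw [← mem_powers_iff_mem_zpowers] at hg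
      obtain ⟨k, hk⟩ := hg
      refine ⟨k, (g0 ^ k)⁻¹ * g, ?_, by simp⟩
      rw [← QuotientGroup.eq, QuotientGroup.mk_pow, h0]
      exact hk
    have hsch : Sch (ρ.comp N.subtype) := by
      by_cases h0 : LinearMap.trace ℂ V (ρ q) = 0
      · refine cyc_sch N b (hgen b (QuotientGroup.eq.2 hbN).symm) ρ hirr (fun h => htr (h0.trans h.symm))
      · exact cyc_sch N q (hgen q rfl) ρ hirr h0
    let Vr : FDRep ℂ N := FDRep.of (ρ.comp N.subtype)
    have hVr : Simple Vr := (simple_iff_sch Vr).2 hsch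
    refine ⟨Vr.character, ⟨Vr, hVr, rfl⟩, fun h1 => ?_, (FDRep.of ρ).character,
      ⟨FDRep.of ρ, (simple_iff_sch (FDRep.of ρ)).2 (sch_of_irr ρ hirr), rfl⟩, rfl⟩
    have ht : ∀ n : N, LinearMap.trace ℂ V (ρ (n : G)) = 1 := fun n => congrFun h1 n
    have hd : Module.finrank ℂ V = 1 := by
      have := ht 1
      simp only [Subgroup.coe_one, map_one, LinearMap.trace_one] at this
      exact_mod_cast this
    obtain ⟨c, hc⟩ : ∃ c : ℂ, ρ (q⁻¹ * b) = c • LinearMap.id := by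
      obtain ⟨v, hv, hsp⟩ := finrank_eq_one_iff'.1 hd
      obtain ⟨c, hc⟩ := hsp (ρ (q⁻¹ * b) v)
      refine ⟨c, LinearMap.ext fun w => ?_⟩
      obtain ⟨e, rfl⟩ := hsp w
      simp only [map_smul, LinearMap.smul_apply, LinearMap.id_apply, ← hc]
    have hc1 : c = 1 := by
      have := ht ⟨_, hbN⟩
      simp only [hc, map_smul, LinearMap.trace_id, hd] at this
      simpa using this
    apply htr
    have : b = q * (q⁻¹ * b) := by simp
    rw [this, map_mul, hc, hc1, one_smul]
    rfl
end

section
/- Let G be a finite group and N a normal subgroup with Q = G/N abelian. Then the number of conjugacy classes of G contained in N equals the number of orbits of the action of Q̂ on the set of complex irreducible characters of G. -/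
open scoped BigOperators

variable {G : Type} [Group G]

theorem irr_char_of_isIrreducible {G : Type} [Group G] [Fintype G] {V : Type} [AddCommGroup V]
    [Module ℂ V] [FiniteDimensional ℂ V] (σ : Representation ℂ G V)
    [Representation.IsIrreducible σ] : IsIrrChar G σ.character := by
  classical
  refine ⟨FDRep.of σ, ?_, rfl⟩
  rw [FDRep.simple_iff_char_is_norm_one]
  have := invertibleOfNonzero (NeZero.ne (Nat.card G : ℂ))
  have h := Representation.char_orthonormal σ σ
  rw [if_pos ⟨Representation.Equiv.refl σ⟩] at h
  rw [inv_mul_eq_one₀ (NeZero.ne (Nat.card G : ℂ))] at h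
  exact h.symm

theorem op_eq_zero {G : Type} [Group G] [Fintype G] {V : Type} [AddCommGroup V]
    [Module ℂ V] [FiniteDimensional ℂ V] (σ : Representation ℂ G V)
    [Representation.IsIrreducible σ] (f : G → ℂ) (hf : ∀ g h : G, f (h * g * h⁻¹) = f g)
    (h0 : ∑ g, f g * σ.character g⁻¹ = 0) : ∑ g, f g • σ g⁻¹ = 0 := by
  let A : Representation.IntertwiningMap σ σ :=
    { toLinearMap := ∑ g, f g • σ g⁻¹
      isIntertwining' := by
        intro x
        change (∑ g, f g • σ g⁻¹) * σ x = σ x * (∑ g, f g • σ g⁻¹)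
        rw [Finset.sum_mul, Finset.mul_sum]
        refine Fintype.sum_equiv (MulAut.conj x⁻¹).toEquiv _ _ fun g => ?_
        simp only [MulEquiv.toEquiv_eq_coe, MulEquiv.coe_toEquiv, MulAut.conj_apply, hf,
          smul_mul_assoc, mul_smul_comm, ← map_mul]
        congr 2
        group }
  obtain ⟨c, hc⟩ :=
    (Representation.IsIrreducible.algebraMap_intertwiningMap_bijective_of_isAlgClosed
      (ρ := σ)).2 A
  have hA : (∑ g, f g • σ g⁻¹) = c • (1 : Module.End ℂ V) := by
    have := congrArg Representation.IntertwiningMap.toLinearMap hc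
    exact this.symm
  have ht := congrArg (LinearMap.trace ℂ V) hA
  simp only [map_sum, map_smul, LinearMap.trace_one, smul_eq_mul] at ht
  have : c = 0 := by
    have h2 : (Module.finrank ℂ V : ℂ) ≠ 0 := by
      have : Nontrivial V := by
        by_contra hn
        rw [not_nontrivial_iff_subsingleton] at hn
        exact (bot_ne_top (α := Subrepresentation σ))
          (by ext v; simp [Subsingleton.elim v 0])
      exact_mod_cast Module.finrank_pos.ne'
    have : c * Module.finrank ℂ V = 0 := by
      rw [← ht]; exact h0
    exact (mul_eq_zero.1 this).resolve_right h2
  rw [hA, this, zero_smul]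

theorem smul_eq_zero_of_simple {G : Type} [Group G] [Fintype G] (f : G → ℂ)
    (hf : ∀ g h : G, f (h * g * h⁻¹) = f g)
    (h0 : ∀ ρ, IsIrrChar G ρ → ∑ g, f g * ρ g⁻¹ = 0)
    (M : Type) [AddCommGroup M] [Module (MonoidAlgebra ℂ G) M]
    [hs : IsSimpleModule (MonoidAlgebra ℂ G) M] (x : M) :
    (∑ g, MonoidAlgebra.single g⁻¹ (f g) : MonoidAlgebra ℂ G) • x = 0 := by
  letI : Module ℂ M := Module.compHom M (algebraMap ℂ (MonoidAlgebra ℂ G))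
  haveI : IsScalarTower ℂ (MonoidAlgebra ℂ G) M := ⟨fun c r y => by
    rw [Algebra.smul_def, mul_smul]; rfl⟩
  let σ : Representation ℂ G M := Representation.ofModule' M
  have hact : ∀ (r : MonoidAlgebra ℂ G) (y : M), σ.asAlgebraHom r y = r • y := by
    intro r y
    have : σ.asAlgebraHom = Algebra.lsmul ℂ ℂ M := by
      simp [σ, Representation.asAlgebraHom, Representation.ofModule']
    rw [this]; rfl
  let e : σ.asModule ≃ₗ[MonoidAlgebra ℂ G] M :=
    { σ.asModuleEquiv.toAddEquiv with
      map_smul' := by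
        intro r y
        refine Eq.trans (σ.asModuleEquiv_map_smul r y) ?_
        exact hact _ _ }
  have hi : Representation.IsIrreducible σ := by
    rw [Representation.irreducible_iff_isSimpleModule_asModule]
    exact IsSimpleModule.congr e
  have : FiniteDimensional ℂ M := Module.Finite.trans (MonoidAlgebra ℂ G) M
  have h1 := op_eq_zero σ f hf (h0 _ (irr_char_of_isIrreducible σ))
  have h2 : σ.asAlgebraHom (∑ g, MonoidAlgebra.single g⁻¹ (f g) : MonoidAlgebra ℂ G) = 0 := by
    rw [← h1]; simp [Representation.asAlgebraHom_single]
  rw [← hact, h2, LinearMap.zero_apply]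

theorem classFun_eq_zero {G : Type} [Group G] [Fintype G] (f : G → ℂ)
    (hf : ∀ g h : G, f (h * g * h⁻¹) = f g)
    (h0 : ∀ ρ, IsIrrChar G ρ → ∑ g, f g * ρ g⁻¹ = 0) : f = 0 := by
  classical
  let z : MonoidAlgebra ℂ G := ∑ g, MonoidAlgebra.single g⁻¹ (f g)
  have hz : z = 0 := by
    have hJ : z ∈ Module.jacobson (MonoidAlgebra ℂ G) (MonoidAlgebra ℂ G) := by
      rw [Module.jacobson, Submodule.mem_sInf]
      intro m hm
      have hs : IsSimpleModule (MonoidAlgebra ℂ G) (MonoidAlgebra ℂ G ⧸ m) :=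
        isSimpleModule_iff_isCoatom.2 hm
      have h3 := smul_eq_zero_of_simple f hf h0 (MonoidAlgebra ℂ G ⧸ m)
        (Submodule.Quotient.mk (p := m) 1)
      rw [← Submodule.Quotient.mk_smul, smul_eq_mul, mul_one, Submodule.Quotient.mk_eq_zero] at h3
      exact h3
    rw [IsSemisimpleModule.jacobson_eq_bot] at hJ
    simpa using hJ
  funext g
  have := congrArg (fun w : MonoidAlgebra ℂ G => w.coeff g⁻¹) hz
  simpa [z, Finsupp.single_apply] using this

theorem charMul_irr {G : Type} [Group G] [Fintype G] (N : Subgroup G) [N.Normal]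
    (χ : (G ⧸ N) →* ℂˣ) (ρ : G → ℂ) (h : IsIrrChar G ρ) : IsIrrChar G (charMul N χ ρ) := by
  obtain ⟨V, hV, rfl⟩ := h
  let τ : Representation ℂ G V :=
    { toFun := fun g => (χ (g : G ⧸ N) : ℂ) • V.ρ g
      map_one' := by simp
      map_mul' := by
        intro a b
        simp [smul_smul, mul_comm] }
  have hτ : (FDRep.of τ).character = charMul N χ V.character := by
    funext g
    simp [FDRep.character, charMul, τ]
  refine ⟨FDRep.of τ, ?_, hτ.symm⟩
  rw [FDRep.simple_iff_char_is_norm_one] at hV ⊢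
  rw [← hV, hτ]
  refine Finset.sum_congr rfl fun g _ => ?_
  simp only [charMul, QuotientGroup.mk_inv, map_inv]
  rw [mul_mul_mul_comm, Units.mul_inv, one_mul]

theorem irr_orth {G : Type} [Group G] [Fintype G] (ρ σ : G → ℂ) (hρ : IsIrrChar G ρ)
    (hσ : IsIrrChar G σ) (h : ρ ≠ σ) : ∑ g, ρ g * σ g⁻¹ = 0 := by
  classical
  obtain ⟨V, hV, rfl⟩ := hρ
  obtain ⟨W, hW, rfl⟩ := hσ
  have := invertibleOfNonzero (NeZero.ne (Nat.card G : ℂ))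
  have h1 := FDRep.char_orthonormal V W
  rw [if_neg (fun ⟨i⟩ => h (FDRep.char_iso i))] at h1
  exact (mul_eq_zero.1 h1).resolve_left (inv_ne_zero (NeZero.ne (Nat.card G : ℂ)))

theorem irr_norm {G : Type} [Group G] [Fintype G] (ρ : G → ℂ) (hρ : IsIrrChar G ρ) :
    ∑ g, ρ g * ρ g⁻¹ = Nat.card G := by
  obtain ⟨V, hV, rfl⟩ := hρ
  rwa [FDRep.simple_iff_char_is_norm_one] at hV

theorem irr_conj {G : Type} [Group G] (ρ : G → ℂ) (hρ : IsIrrChar G ρ) (g h : G) :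
    ρ (h * g * h⁻¹) = ρ g := by
  obtain ⟨V, hV, rfl⟩ := hρ
  simp

theorem sum_chars {G : Type} [Group G] [Fintype G] (N : Subgroup G) [N.Normal]
    (hQ : ∀ a b : G ⧸ N, a * b = b * a) [Fintype ((G ⧸ N) →* ℂˣ)] (q : G ⧸ N) (hq : q ≠ 1) :
    ∑ χ : (G ⧸ N) →* ℂˣ, (χ q : ℂ) = 0 := by
  letI : CommGroup (G ⧸ N) := { (inferInstance : Group (G ⧸ N)) with mul_comm := hQ }
  obtain ⟨φ, hφ⟩ := CommGroup.exists_apply_ne_one_of_hasEnoughRootsOfUnity (G ⧸ N) ℂ hq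
  have h : (φ q : ℂ) * ∑ χ : (G ⧸ N) →* ℂˣ, (χ q : ℂ) = ∑ χ : (G ⧸ N) →* ℂˣ, (χ q : ℂ) := by
    rw [Finset.mul_sum]
    refine Fintype.sum_equiv (Equiv.mulLeft φ) _ _ fun χ => ?_
    simp
  have h' : ((φ q : ℂ) - 1) * ∑ χ : (G ⧸ N) →* ℂˣ, (χ q : ℂ) = 0 := by
    rw [sub_mul, h, one_mul, sub_self]
  refine (mul_eq_zero.1 h').resolve_left fun h => hφ ?_
  ext
  simpa using sub_eq_zero.1 h

open Classical in
theorem sum_N {G : Type} [Group G] [Fintype G] (N : Subgroup G) [N.Normal]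
    (hQ : ∀ a b : G ⧸ N, a * b = b * a) [Fintype ((G ⧸ N) →* ℂˣ)] (ρ σ : G → ℂ) :
    ∑ χ : (G ⧸ N) →* ℂˣ, ∑ g, charMul N χ ρ g * σ g⁻¹ =
      Fintype.card ((G ⧸ N) →* ℂˣ) * ∑ g, if g ∈ N then ρ g * σ g⁻¹ else 0 := by
  rw [Finset.sum_comm, Finset.mul_sum]
  refine Finset.sum_congr rfl fun g _ => ?_
  simp only [charMul, mul_assoc]
  rw [← Finset.sum_mul]
  split_ifs with h
  · rw [(QuotientGroup.eq_one_iff g).2 h]; simp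
  · rw [sum_chars N hQ _ (fun h' => h ((QuotientGroup.eq_one_iff g).1 h'))]; simp

theorem mem_qhatOrbit_self {G : Type} [Group G] (N : Subgroup G) [N.Normal] (ρ : G → ℂ) :
    ρ ∈ qhatOrbit N ρ := ⟨1, by funext g; simp [charMul]⟩

theorem qhatOrbit_eq {G : Type} [Group G] (N : Subgroup G) [N.Normal]
    (hQ : ∀ a b : G ⧸ N, a * b = b * a) (χ : (G ⧸ N) →* ℂˣ) (ρ : G → ℂ) :
    qhatOrbit N (charMul N χ ρ) = qhatOrbit N ρ := by
  ext τ
  constructor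
  · rintro ⟨φ, rfl⟩
    exact ⟨φ * χ, by funext g; simp [charMul, mul_assoc]⟩
  · rintro ⟨φ, rfl⟩
    exact ⟨φ * χ⁻¹, by funext g; simp [charMul, mul_assoc]⟩

/-- The number of conjugacy classes of `G` contained in `N` equals the
number of `Q̂`-orbits on `Irr G`. -/
theorem conjClasses_in_N_card_eq_orbits_card
    (G : Type) [Group G] [Fintype G] (N : Subgroup G) [N.Normal]
    (hQ : ∀ a b : G ⧸ N, a * b = b * a) :
    {c : ConjClasses G | c.carrier ⊆ (N : Set G)}.ncard =
      {S : Set (G → ℂ) | ∃ ρ, IsIrrChar G ρ ∧ S = qhatOrbit N ρ}.ncard := by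
  classical
  have hfinQ : Finite ((G ⧸ N) →* ℂˣ) := inferInstance
  have := Fintype.ofFinite ((G ⧸ N) →* ℂˣ)
  set C := {c : ConjClasses G | c.carrier ⊆ (N : Set G)} with hC
  set T := {S : Set (G → ℂ) | ∃ ρ, IsIrrChar G ρ ∧ S = qhatOrbit N ρ} with hT
  have hmem : ∀ c : ConjClasses G, c ∈ C ↔ ∀ g, ConjClasses.mk g = c → g ∈ N := fun c =>
    ⟨fun h g hg => h (ConjClasses.mem_carrier_iff_mk_eq.2 hg),
     fun h g hg => h g (ConjClasses.mem_carrier_iff_mk_eq.1 hg)⟩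
  have hmk : ∀ g : G, ConjClasses.mk g ∈ C ↔ g ∈ N := fun g => by
    rw [hmem]
    refine ⟨fun h => h g rfl, fun h x hx => ?_⟩
    obtain ⟨y, rfl⟩ := isConj_iff.1 (ConjClasses.mk_eq_mk_iff_isConj.1 hx.symm)
    exact Subgroup.Normal.conj_mem inferInstance g h y
  choose r hr1 hr2 using fun S : T => S.2
  choose rep hrep using fun c : C => ConjClasses.exists_rep c.1
  have hrepN : ∀ c, rep c ∈ N := fun c => by
    rw [← hmk, hrep]; exact c.2
  -- the restrictions are independent
  let v : T → (C → ℂ) := fun S c => r S (rep c)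
  have hv : ∀ S g (hg : g ∈ N), r S g = v S ⟨ConjClasses.mk g, (hmk g).2 hg⟩ := by
    intro S g hg
    have := hrep ⟨ConjClasses.mk g, (hmk g).2 hg⟩
    obtain ⟨y, hy⟩ := isConj_iff.1 (ConjClasses.mk_eq_mk_iff_isConj.1 this)
    conv_lhs => rw [← hy]
    exact irr_conj _ (hr1 S) _ _
  have hcard : (Fintype.card ((G ⧸ N) →* ℂˣ) : ℂ) ≠ 0 := by
    exact_mod_cast Fintype.card_ne_zero
  have horth : ∀ S S' : T, S ≠ S' → (∑ g, if g ∈ N then r S g * r S' g⁻¹ else 0) = 0 := by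
    intro S S' hne
    have h := sum_N N hQ (r S) (r S')
    rw [Finset.sum_eq_zero] at h
    · exact (mul_eq_zero.1 h.symm).resolve_left hcard
    · intro χ _
      refine irr_orth _ _ (charMul_irr N χ _ (hr1 S)) (hr1 S') fun heq => hne ?_
      apply Subtype.ext
      rw [hr2 S, hr2 S', ← heq, qhatOrbit_eq N hQ]
  have hnorm : ∀ S : T, (∑ g, if g ∈ N then r S g * r S g⁻¹ else 0) ≠ 0 := by
    intro S h0
    have h := sum_N N hQ (r S) (r S)
    rw [h0, mul_zero] at h
    have h' : ∀ χ : (G ⧸ N) →* ℂˣ, ∑ g, charMul N χ (r S) g * r S g⁻¹ =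
        ((if charMul N χ (r S) = r S then Nat.card G else 0 : ℕ) : ℂ) := by
      intro χ
      split_ifs with hh
      · rw [hh, irr_norm _ (hr1 S)]
      · rw [irr_orth _ _ (charMul_irr N χ _ (hr1 S)) (hr1 S) hh, Nat.cast_zero]
    rw [Finset.sum_congr rfl fun χ _ => h' χ, ← Nat.cast_sum, Nat.cast_eq_zero,
      Finset.sum_eq_zero_iff] at h
    have := h 1 (Finset.mem_univ _)
    rw [if_pos (by funext g; simp [charMul])] at this
    exact Nat.card_pos.ne' this
  have hli : LinearIndependent ℂ v := by
    rw [linearIndependent_iff']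
    intro s a ha S hS
    have h1 : ∀ g ∈ N, ∑ S' ∈ s, a S' * r S' g = 0 := by
      intro g hg
      have := congrFun ha ⟨ConjClasses.mk g, (hmk g).2 hg⟩
      rw [Finset.sum_apply] at this
      rw [Finset.sum_congr rfl fun S' _ => by rw [hv S' g hg]]
      exact this
    have h2 : ∑ S' ∈ s, a S' * (∑ g, if g ∈ N then r S' g * r S g⁻¹ else 0) = 0 := by
      simp_rw [Finset.mul_sum]
      rw [Finset.sum_comm]
      refine Finset.sum_eq_zero fun g _ => ?_
      by_cases hg : g ∈ N
      · simp only [hg, if_true, ← mul_assoc]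
        rw [← Finset.sum_mul, h1 g hg, zero_mul]
      · simp [hg]
    rw [Finset.sum_eq_single S (fun S' _ hne => by rw [horth S' S hne, mul_zero])
      (fun h => absurd hS h)] at h2
    exact (mul_eq_zero.1 h2).resolve_right (hnorm S)
  have hCfin : Fintype C := Fintype.ofFinite C
  have hTfin' : Finite T := hli.finite
  have hTfin : Fintype T := Fintype.ofFinite T
  have hle : Fintype.card T ≤ Fintype.card C := by
    simpa using hli.fintype_card_le_finrank
  let Φ : (C → ℂ) →ₗ[ℂ] (T → ℂ) :=
    { toFun := fun b S => ∑ g, if h : g ∈ N then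
        b ⟨ConjClasses.mk g, (hmk g).2 h⟩ * r S g⁻¹ else 0
      map_add' := by
        intro b b'
        funext S
        simp only [Pi.add_apply, ← Finset.sum_add_distrib]
        refine Finset.sum_congr rfl fun g _ => ?_
        split_ifs <;> simp [add_mul]
      map_smul' := by
        intro c b
        funext S
        simp only [Pi.smul_apply, smul_eq_mul, RingHom.id_apply, Finset.mul_sum]
        refine Finset.sum_congr rfl fun g _ => ?_
        split_ifs <;> simp [mul_assoc] }
  have hinj : Function.Injective Φ := by
    rw [← LinearMap.ker_eq_bot, LinearMap.ker_eq_bot']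
    intro b hb
    let f : G → ℂ := fun g => if h : g ∈ N then b ⟨ConjClasses.mk g, (hmk g).2 h⟩ else 0
    have hf : f = 0 := by
      apply classFun_eq_zero
      · intro g h
        have e : h * g * h⁻¹ ∈ N ↔ g ∈ N :=
          ⟨fun hh => by
            have := Subgroup.Normal.conj_mem (inferInstance : N.Normal) _ hh h⁻¹
            simpa [mul_assoc] using this,
           fun hh => Subgroup.Normal.conj_mem inferInstance g hh h⟩
        have e2 : ConjClasses.mk (h * g * h⁻¹) = ConjClasses.mk g :=
          ConjClasses.mk_eq_mk_iff_isConj.2 (isConj_iff.2 ⟨h, rfl⟩).symm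
        simp only [f, e, e2]
      · intro ρ hρ
        let S : T := ⟨qhatOrbit N ρ, ρ, hρ, rfl⟩
        have hS : ρ ∈ qhatOrbit N (r S) := by
          rw [← hr2 S]; exact mem_qhatOrbit_self N ρ
        obtain ⟨χ, hχ⟩ := hS
        have := congrFun hb S
        refine Eq.trans (Finset.sum_congr rfl fun g _ => ?_) this
        by_cases hg : g ∈ N
        · have : ρ g⁻¹ = r S g⁻¹ := by
            conv_lhs => rw [hχ]
            rw [charMul, (QuotientGroup.eq_one_iff _).2 (N.inv_mem hg)]
            simp
          simp [f, hg, this]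
        · simp [f, hg]
    funext c
    have h1 := congrFun hf (rep c)
    simp only [f, hrepN c, dif_pos] at h1
    have h2 : (⟨ConjClasses.mk (rep c), (hmk _).2 (hrepN c)⟩ : C) = c := Subtype.ext (hrep c)
    rwa [h2] at h1
  have hge : Fintype.card C ≤ Fintype.card T := by
    simpa using LinearMap.finrank_le_finrank_of_injective hinj
  rw [← Nat.card_coe_set_eq, ← Nat.card_coe_set_eq, Nat.card_eq_fintype_card,
    Nat.card_eq_fintype_card]
  exact le_antisymm hge hle
end
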